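/- Let I be a nonempty finite index set, let 𝒜 = (A_i)_{i∈I} be a uniformly hyperbolic family in SL₂(ℝ) with attractor K, let p be a nondegenerate probability vector, and let ν be the stationary measure of (𝒜,p). Then for every q > 1 the sequence (−(1/m)·log Σ_{I∈𝒟_m} ν(I)^q)_{m≥1} converges; in particular the liminf in the definition of the L^q spectrum τ(ν,q) is a limit. -/

import Mathlib

/-!
Write `S m` for the `L^q` sum of level `m`. If `ν` has an atom, then `S m` is bounded below by a
positive constant and above by `1`, so the limit exists and is `0` (`tendsto_of_atom`). Otherwise
`S (n + m) ≤ C * S n * S m` with `C` independent of `n` and `m` (`exists_lqSum_add_le`), and since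
`S m ≥ 2^(-m q)`, Fekete's lemma gives the limit (`exists_tendsto_of_submul`).

The geometry is expressed in the metric `sd x y = |sin ∠(x, y)|` on `ℝP¹` and the expansion factors
`gr A x = ‖A v‖ / ‖v‖`, `x = [v]`. They are linked by the exact identity
`sd (A x) (A y) * gr A x * gr A y = sd x y` (`sd_pact`), which follows from `det A = 1`.

Uniform hyperbolicity first yields quasi-multiplicativity, `‖A_w A_v‖ ≥ c₀ ‖A_w‖ ‖A_v‖` for all words
(`quasi_mul`). If the product were much smaller, the most contracted direction of `A_w` would be very
close to the most expanded image direction of `A_v`. Truncating both words around the junction, at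
norm about `L`, moves these directions only slightly (`exists_cut`) and produces a word whose product
has norm at most about `L^κ`, although its length forces the norm to be at least about `L^(2κ)`; so
`L` is bounded (`exists_scale_bound`).

Iterating the stationarity equation decomposes `ν` into pieces `a_u (A_u)_* ν` over finitely many
words `u` of norm comparable to any prescribed `R ≥ 1` (`exists_decomp`). If `ν` has no atoms, taking
`R → ∞` and using quasi-multiplicativity shows that `ν`-almost every `x` satisfies
`gr A_w x ≥ c ‖A_w‖` for all words `w` simultaneously (`exists_goodSet`).

For submultiplicativity, take `R = 2^(n/2)`. By the last property, each `(A_u)_* ν` is carried by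
boundedly many arcs of level `n`. In the other direction `A_u` contracts by at most a factor of order
`2^(-n)`, so the preimage of an arc of level `n + m` meets boundedly many arcs of level `m`, and the
`L^q` sum of level `n + m` of `(A_u)_* ν` is at most a constant times `S m` (`sum_preimage_le`). By
Hölder's inequality the contribution to `S (n + m)` of the arcs contained in an arc `I` of level `n`
is at most a constant times `P_I^q * S m`, where `P_I` is the total weight of the words whose piece
charges `I`. Finally `P_I` is at most the `ν`-mass of boundedly many neighbours of `I`, so the sum of
the `P_I^q` is at most a constant times `S n` (`lqSum_add_le_of_decomp`).
-/

open MeasureTheory Filter Set Topology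

namespace Paper

noncomputable section

abbrev Mat2 : Type := Matrix (Fin 2) (Fin 2) ℝ
abbrev SL2 : Type := Matrix.SpecialLinearGroup (Fin 2) ℝ

/-- The operator norm on 2×2 real matrices induced by the Euclidean norm on ℝ². -/
def opNorm (M : Mat2) : ℝ := ‖(Matrix.toEuclideanLin M).toContinuousLinearMap‖

/-- The product `A_{i₁} ⋯ A_{i_n}` of the matrices along a word `w = (i₁, …, i_n)`. -/
def wordProd {ι : Type*} (A : ι → SL2) (w : List ι) : SL2 := (w.map A).prod

/-- The product `p_{i₁} ⋯ p_{i_n}` of the weights along a word `w = (i₁, …, i_n)`. -/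
def wordWeight {ι : Type*} (p : ι → ℝ) (w : List ι) : ℝ := (w.map p).prod

/-- A finite family in SL₂(ℝ) is uniformly hyperbolic if `‖A_i‖ ≥ c rⁿ` for all words of
length `n ≥ 1`. -/
def UniformlyHyperbolic {ι : Type*} (A : ι → SL2) : Prop :=
  ∃ c > (0:ℝ), ∃ r > (1:ℝ), ∀ w : List ι, w ≠ [] →
    c * r ^ w.length ≤ opNorm (wordProd A w : Mat2)

/-- Strongly Diophantine: distinct words of the same length give matrices that are
exponentially separated. -/
def StronglyDiophantine {ι : Type*} (A : ι → SL2) : Prop :=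
  ∃ c ∈ Set.Ioo (0:ℝ) 1, ∀ w w' : List ι, w ≠ [] → w.length = w'.length → w ≠ w' →
    c ^ w.length ≤ opNorm ((wordProd A w : Mat2) - (wordProd A w' : Mat2))

/-- The real projective line. -/
abbrev RP1 : Type := Projectivization ℝ (Fin 2 → ℝ)

lemma cos_sin_ne_zero (θ : ℝ) : ![Real.cos θ, Real.sin θ] ≠ 0 := by
  intro h
  have h0 : Real.cos θ = 0 := by simpa using congrFun h 0
  have h1 : Real.sin θ = 0 := by simpa using congrFun h 1
  have h2 := Real.sin_sq_add_cos_sq θ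
  rw [h0, h1] at h2
  norm_num at h2

/-- The point of ℝP¹ in the direction of angle `θ`. -/
def dir (θ : ℝ) : RP1 := Projectivization.mk ℝ ![Real.cos θ, Real.sin θ] (cos_sin_ne_zero θ)

/-- The quotient topology on ℝP¹ (expressed through the angle parametrization). -/
instance : TopologicalSpace RP1 := TopologicalSpace.coinduced dir inferInstance

/-- The Borel σ-algebra on ℝP¹. -/
instance : MeasurableSpace RP1 := borel RP1

/-- The natural action of `A ∈ SL₂(ℝ)` on ℝP¹, `A·[v] = [Av]`. -/
def pact (A : SL2) : RP1 → RP1 :=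
  Projectivization.map (Matrix.SpecialLinearGroup.toLin' A).toLinearMap
    (Matrix.SpecialLinearGroup.toLin' A).injective

/-- `K` is the attractor of the family `A`: the (unique) nonempty compact set with
`K = ⋃ᵢ Aᵢ·K`. -/
def IsAttractor {ι : Type*} [Fintype ι] (A : ι → SL2) (K : Set RP1) : Prop :=
  K.Nonempty ∧ IsCompact K ∧ K = ⋃ i : ι, pact (A i) '' K

/-- `ν` is stationary for the family `A` with weights `p`: `ν = Σ_i p_i (A_i)_* ν`. -/
def IsStationary {ι : Type*} [Fintype ι] (A : ι → SL2) (p : ι → ℝ) (ν : Measure RP1) : Prop :=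
  ν = ∑ i : ι, ENNReal.ofReal (p i) • Measure.map (pact (A i)) ν

/-- The `k`-th arc of the `2^{-m}` dyadic partition of ℝP¹. -/
def dyadic (m k : ℕ) : Set RP1 :=
  dir '' Set.Ico (Real.pi * k / 2 ^ m) (Real.pi * (k + 1) / 2 ^ m)

/-- The concentric doubled arc `2I` of the `k`-th arc of the `2^{-m}` dyadic partition. -/
def dyadic2 (m k : ℕ) : Set RP1 :=
  dir '' Set.Ico (Real.pi * ((k : ℝ) - 1 / 2) / 2 ^ m) (Real.pi * ((k : ℝ) + 3 / 2) / 2 ^ m)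

/-- `Σ_{I ∈ 𝒟_m} ν(I)^q`. -/
def lqSum (ν : Measure RP1) (q : ℝ) (m : ℕ) : ℝ :=
  ∑ k ∈ Finset.range (2 ^ m), ((ν (dyadic m k)).toReal) ^ q

/-- The L^q spectrum `τ(ν,q) = liminf_m −(1/m) log₂ Σ_{I∈𝒟_m} ν(I)^q`. -/
def lqSpectrum (ν : Measure RP1) (q : ℝ) : ℝ :=
  Filter.liminf (fun m : ℕ => -(1 / (m : ℝ)) * Real.logb 2 (lqSum ν q m)) Filter.atTop

/-- `(1/n) log₂ Σ_{i ∈ Iⁿ} p_i^q ‖A_i‖^{2s}`, the `n`-th approximant of the pressure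
`Ψ_q(s)`. -/
def psiAvg {ι : Type*} [Fintype ι] (A : ι → SL2) (p : ι → ℝ) (q s : ℝ) (n : ℕ) : ℝ :=
  (1 / (n : ℝ)) * Real.logb 2
    (∑ w : Fin n → ι,
      (wordWeight p (List.ofFn w)) ^ q * (opNorm (wordProd A (List.ofFn w) : Mat2)) ^ (2 * s))

/-- `t = τ̃(q)`: `t` is the unique positive zero of the pressure function `Ψ_q`. -/
def IsPressureZero {ι : Type*} [Fintype ι] (A : ι → SL2) (p : ι → ℝ) (q t : ℝ) : Prop :=
  0 < t ∧
  Filter.Tendsto (fun n => psiAvg A p q t n) Filter.atTop (nhds 0) ∧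
  ∀ s : ℝ, 0 < s → Filter.Tendsto (fun n => psiAvg A p q s n) Filter.atTop (nhds 0) → s = t

/-- The angle metric on ℝP¹: `d([v],[w]) = arccos(|⟨v,w⟩| / (‖v‖ ‖w‖))`. -/
def pdist (x y : RP1) : ℝ :=
  Real.arccos (|x.rep 0 * y.rep 0 + x.rep 1 * y.rep 1| /
    (Real.sqrt (x.rep 0 ^ 2 + x.rep 1 ^ 2) * Real.sqrt (y.rep 0 ^ 2 + y.rep 1 ^ 2)))

/-- The open ball in ℝP¹ of radius `r` and center `x`. -/
def pball (x : RP1) (r : ℝ) : Set RP1 := {y | pdist x y < r}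

instance : Fact (0 < Real.pi) := ⟨Real.pi_pos⟩

/-- The angle coordinate `Θ : ℝP¹ → ℝ/πℤ`. -/
def theta (x : RP1) : AddCircle Real.pi :=
  ((Complex.arg ((x.rep 0 : ℂ) + (x.rep 1 : ℂ) * Complex.I) : ℝ) : AddCircle Real.pi)

/-- `w` is a `2^m` stopping word for the family `A`. -/
def IsStopping {ι : Type*} (A : ι → SL2) (m : ℕ) (w : List ι) : Prop :=
  w ≠ [] ∧
  (∀ j : ℕ, 1 ≤ j → j < w.length → opNorm (wordProd A (w.take j) : Mat2) ^ 2 < (2:ℝ) ^ m) ∧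
  (2 : ℝ) ^ m ≤ opNorm (wordProd A w : Mat2) ^ 2

/-- `Σ_{i ∈ Ω_m} p_i^q`, the `L^q` sum over the `2^m` stopping words. -/
def stopSum {ι : Type*} [Fintype ι] (A : ι → SL2) (p : ι → ℝ) (q : ℝ) (m : ℕ) : ℝ :=
  ∑' w : List ι,
    Set.indicator {w : List ι | IsStopping A m w} (fun w => (wordWeight p w) ^ q) w

/-- `Σ_{J ∈ 𝒟_{s+m}(I)} ν(J)^q` for `I` the `k`-th arc of `𝒟_s`. -/
def localSum (ν : Measure RP1) (q : ℝ) (s m k : ℕ) : ℝ :=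
  ∑ j ∈ Finset.range (2 ^ (s + m)),
    Set.indicator {j : ℕ | (dyadic (s + m) j ∩ dyadic s k).Nonempty}
      (fun j => (ν (dyadic (s + m) j)).toReal ^ q) j


/-! ### The projective line in the angle coordinate -/

/-- The unit vector at angle `θ`. -/
def uvec (θ : ℝ) : Fin 2 → ℝ := ![Real.cos θ, Real.sin θ]

/-- The Euclidean norm of a vector of `ℝ²`. -/
def nrm (v : Fin 2 → ℝ) : ℝ := Real.sqrt (v 0 ^ 2 + v 1 ^ 2)

/-- The determinant of two vectors of `ℝ²`. -/
def wedge (v w : Fin 2 → ℝ) : ℝ := v 0 * w 1 - v 1 * w 0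

lemma nrm_nonneg (v : Fin 2 → ℝ) : 0 ≤ nrm v := Real.sqrt_nonneg _

lemma nrm_sq (v : Fin 2 → ℝ) : nrm v ^ 2 = v 0 ^ 2 + v 1 ^ 2 := Real.sq_sqrt (by positivity)

lemma nrm_eq_norm (v : Fin 2 → ℝ) : nrm v = ‖WithLp.toLp 2 v‖ := by
  simp [nrm, EuclideanSpace.norm_eq]

lemma nrm_smul (t : ℝ) (v : Fin 2 → ℝ) : nrm (t • v) = |t| * nrm v := by
  rw [nrm_eq_norm, nrm_eq_norm, WithLp.toLp_smul, norm_smul, Real.norm_eq_abs]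

lemma nrm_add_le (v w : Fin 2 → ℝ) : nrm (v + w) ≤ nrm v + nrm w := by
  simp only [nrm_eq_norm, WithLp.toLp_add]; exact norm_add_le _ _

lemma nrm_uvec (θ : ℝ) : nrm (uvec θ) = 1 := by simp [nrm, uvec]

lemma wedge_uvec (θ φ : ℝ) : wedge (uvec θ) (uvec φ) = Real.sin (φ - θ) := by
  simp [wedge, uvec, Real.sin_sub]; ring

lemma wedge_smul_smul (s t : ℝ) (v w : Fin 2 → ℝ) :
    wedge (s • v) (t • w) = s * t * wedge v w := by
  simp [wedge]; ring

lemma wedge_mulVec (A : SL2) (v w : Fin 2 → ℝ) :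
    wedge ((A : Mat2).mulVec v) ((A : Mat2).mulVec w) = wedge v w := by
  have h : (A : Mat2) 0 0 * (A : Mat2) 1 1 - (A : Mat2) 0 1 * (A : Mat2) 1 0 = 1 := by
    have := A.2
    rwa [Matrix.det_fin_two] at this
  simp only [wedge, Matrix.mulVec, dotProduct, Fin.sum_univ_two]
  linear_combination (v 0 * w 1 - v 1 * w 0) * h

lemma dir_eq_dir_iff (θ φ : ℝ) : dir θ = dir φ ↔ Real.sin (θ - φ) = 0 := by
  unfold dir
  rw [Projectivization.mk_eq_mk_iff']
  constructor
  · rintro ⟨a, ha⟩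
    have h0 : a * Real.cos φ = Real.cos θ := by simpa using congrFun ha 0
    have h1 : a * Real.sin φ = Real.sin θ := by simpa using congrFun ha 1
    rw [Real.sin_sub, ← h0, ← h1]; ring
  · intro h
    refine ⟨Real.cos (θ - φ), ?_⟩
    have hθ : θ = φ + (θ - φ) := by ring
    ext i
    fin_cases i
    · simp only [Pi.smul_apply, smul_eq_mul]
      show Real.cos (θ - φ) * Real.cos φ = Real.cos θ
      conv_rhs => rw [hθ, Real.cos_add, h]
      ring
    · simp only [Pi.smul_apply, smul_eq_mul]
      show Real.cos (θ - φ) * Real.sin φ = Real.sin θ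
      conv_rhs => rw [hθ, Real.sin_add, h]
      ring

lemma dir_surj (x : RP1) : ∃ θ, dir θ = x := by
  induction x using Projectivization.ind with
  | h v hv =>
    refine ⟨Complex.arg ⟨v 0, v 1⟩, ?_⟩
    unfold dir
    rw [Projectivization.mk_eq_mk_iff']
    have hz : (⟨v 0, v 1⟩ : ℂ) ≠ 0 := by
      intro h
      apply hv
      ext i
      fin_cases i
      · simpa using congrArg Complex.re h
      · simpa using congrArg Complex.im h
    refine ⟨‖(⟨v 0, v 1⟩ : ℂ)‖⁻¹, ?_⟩
    ext i
    fin_cases i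
    · simp [Complex.cos_arg hz]; ring
    · simp [Complex.sin_arg]; ring

lemma exists_ang (x : RP1) : ∃ θ, θ ∈ Ico 0 Real.pi ∧ dir θ = x := by
  obtain ⟨θ, rfl⟩ := dir_surj x
  refine ⟨toIcoMod Real.pi_pos 0 θ, by simpa using toIcoMod_mem_Ico Real.pi_pos 0 θ, ?_⟩
  rw [dir_eq_dir_iff, toIcoMod]
  have : θ - toIcoDiv Real.pi_pos 0 θ • Real.pi - θ
      = ((-toIcoDiv Real.pi_pos 0 θ : ℤ) : ℝ) * Real.pi := by
    push_cast
    rw [zsmul_eq_mul]; ring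
  rw [this, Real.sin_int_mul_pi]

/-- The representative in `[0, π)` of the angle of a point of `ℝP¹`. -/
def ang (x : RP1) : ℝ := (exists_ang x).choose

lemma ang_mem (x : RP1) : ang x ∈ Ico 0 Real.pi := (exists_ang x).choose_spec.1

lemma dir_ang (x : RP1) : dir (ang x) = x := (exists_ang x).choose_spec.2

lemma ang_dir {θ : ℝ} (h : θ ∈ Ico 0 Real.pi) : ang (dir θ) = θ := by
  have h1 := dir_ang (dir θ)
  rw [dir_eq_dir_iff] at h1
  have h2 := ang_mem (dir θ)
  rw [Real.sin_eq_zero_iff_of_lt_of_lt (by linarith [h.2, h2.1]) (by linarith [h.1, h2.2])] at h1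
  linarith

/-- The unit vector representing a point of `ℝP¹`. -/
def evec (x : RP1) : Fin 2 → ℝ := uvec (ang x)

/-- The metric `|sin ∠(x, y)|` on `ℝP¹`. -/
def sd (x y : RP1) : ℝ := |wedge (evec x) (evec y)|

/-- The expansion factor `|A v| / |v|` of `A` in the direction `x = [v]`. -/
def gr (A : SL2) (x : RP1) : ℝ := nrm ((A : Mat2).mulVec (evec x))

lemma nrm_evec (x : RP1) : nrm (evec x) = 1 := nrm_uvec _

lemma sd_eq_sin (x y : RP1) : sd x y = |Real.sin (ang x - ang y)| := by
  rw [sd, evec, evec, wedge_uvec, ← abs_neg, ← Real.sin_neg]; congr 2; ring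

lemma sd_nonneg (x y : RP1) : 0 ≤ sd x y := abs_nonneg _

lemma sd_le_one (x y : RP1) : sd x y ≤ 1 := by rw [sd_eq_sin]; exact Real.abs_sin_le_one _

lemma sd_comm (x y : RP1) : sd x y = sd y x := by
  rw [sd_eq_sin, sd_eq_sin, ← abs_neg, ← Real.sin_neg]; congr 2; ring

lemma sd_triangle (x y z : RP1) : sd x z ≤ sd x y + sd y z := by
  simp only [sd_eq_sin]
  have : ang x - ang z = (ang x - ang y) + (ang y - ang z) := by ring
  rw [this, Real.sin_add]
  refine (abs_add_le _ _).trans ?_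
  rw [abs_mul, abs_mul]
  nlinarith [Real.abs_cos_le_one (ang x - ang y), Real.abs_cos_le_one (ang y - ang z),
    abs_nonneg (Real.sin (ang x - ang y)), abs_nonneg (Real.sin (ang y - ang z))]

lemma sd_eq_zero {x y : RP1} (h : sd x y = 0) : x = y := by
  rw [sd_eq_sin, abs_eq_zero, ← dir_eq_dir_iff, dir_ang, dir_ang] at h
  exact h

lemma sd_dir_dir (θ φ : ℝ) : sd (dir θ) (dir φ) = |Real.sin (θ - φ)| := by
  have h1 := (dir_eq_dir_iff _ _).1 (dir_ang (dir θ))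
  have h2 := (dir_eq_dir_iff _ _).1 (dir_ang (dir φ))
  rw [sd_eq_sin]
  set a := ang (dir θ)
  set b := ang (dir φ)
  obtain ⟨m, hm⟩ := Real.sin_eq_zero_iff.1 h1
  obtain ⟨n, hn⟩ := Real.sin_eq_zero_iff.1 h2
  have : a - b = (θ - φ) + ((m - n : ℤ) : ℝ) * Real.pi := by push_cast; linarith
  rw [this, Real.sin_add_int_mul_pi, abs_mul]
  simp

lemma exists_sd_eq_one (x : RP1) : ∃ y, sd x y = 1 := by
  refine ⟨dir (ang x + Real.pi / 2), ?_⟩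
  conv_lhs => rw [← dir_ang x, sd_dir_dir, dir_ang]
  simp

lemma evec_ne_zero (x : RP1) : evec x ≠ 0 := cos_sin_ne_zero _

lemma mk_evec (x : RP1) : Projectivization.mk ℝ (evec x) (evec_ne_zero x) = x := dir_ang x

lemma mulVec_ne_zero (A : SL2) {v : Fin 2 → ℝ} (hv : v ≠ 0) : (A : Mat2).mulVec v ≠ 0 := by
  have := (Matrix.SpecialLinearGroup.toLin' A).injective.ne hv
  rwa [map_zero, Matrix.SpecialLinearGroup.toLin'_apply, Matrix.toLin'_apply] at this

lemma pact_mk (A : SL2) (v : Fin 2 → ℝ) (hv : v ≠ 0) :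
    pact A (Projectivization.mk ℝ v hv)
      = Projectivization.mk ℝ ((A : Mat2).mulVec v) (mulVec_ne_zero A hv) := rfl

lemma exists_mulVec_evec (A : SL2) (x : RP1) :
    ∃ t : ℝ, (A : Mat2).mulVec (evec x) = t • evec (pact A x) ∧ |t| = gr A x := by
  have h : Projectivization.mk ℝ ((A : Mat2).mulVec (evec x)) (mulVec_ne_zero A (evec_ne_zero x))
      = Projectivization.mk ℝ (evec (pact A x)) (evec_ne_zero _) := by
    rw [mk_evec, ← pact_mk A _ (evec_ne_zero x), mk_evec]
  rw [Projectivization.mk_eq_mk_iff'] at h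
  obtain ⟨t, ht⟩ := h
  exact ⟨t, ht.symm, by rw [gr, ← ht, nrm_smul, nrm_evec, mul_one]⟩

lemma pact_mul (A B : SL2) (x : RP1) : pact (A * B) x = pact A (pact B x) := by
  induction x using Projectivization.ind with
  | h v hv => simp only [pact_mk, Matrix.SpecialLinearGroup.coe_mul, Matrix.mulVec_mulVec]

lemma pact_one (x : RP1) : pact 1 x = x := by
  induction x using Projectivization.ind with
  | h v hv => simp only [pact_mk, Matrix.SpecialLinearGroup.coe_one, Matrix.one_mulVec]

lemma gr_mul (A B : SL2) (x : RP1) : gr (A * B) x = gr A (pact B x) * gr B x := by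
  obtain ⟨t, ht, ht'⟩ := exists_mulVec_evec B x
  rw [gr, Matrix.SpecialLinearGroup.coe_mul, ← Matrix.mulVec_mulVec, ht, Matrix.mulVec_smul,
    nrm_smul, ht', mul_comm]
  rfl

lemma gr_one (x : RP1) : gr 1 x = 1 := by
  rw [gr, Matrix.SpecialLinearGroup.coe_one, Matrix.one_mulVec, nrm_evec]

/-- `A` distorts the sine metric exactly by its expansion factors at the two points. -/
lemma sd_pact (A : SL2) (x y : RP1) :
    sd (pact A x) (pact A y) * (gr A x * gr A y) = sd x y := by
  obtain ⟨s, hs, hs'⟩ := exists_mulVec_evec A x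
  obtain ⟨t, ht, ht'⟩ := exists_mulVec_evec A y
  rw [← hs', ← ht', sd, ← abs_mul, ← abs_mul, mul_comm, ← wedge_smul_smul, ← hs, ← ht,
    wedge_mulVec, sd]

lemma gr_nonneg (A : SL2) (x : RP1) : 0 ≤ gr A x := nrm_nonneg _

lemma gr_pos (A : SL2) (x : RP1) : 0 < gr A x := by
  refine (gr_nonneg A x).lt_of_ne' fun h => ?_
  have h1 : gr (A⁻¹ * A) x = 1 := by rw [inv_mul_cancel, gr_one]
  rw [gr_mul, h, mul_zero] at h1
  exact zero_ne_one h1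

/-! ### Norms and the most contracted direction -/

/-- The operator norm of an element of `SL₂(ℝ)`. -/
def N (A : SL2) : ℝ := opNorm (A : Mat2)

lemma nrm_mulVec_le (A : SL2) (v : Fin 2 → ℝ) : nrm ((A : Mat2).mulVec v) ≤ N A * nrm v := by
  rw [nrm_eq_norm, nrm_eq_norm]
  exact (Matrix.toEuclideanLin (A : Mat2)).toContinuousLinearMap.le_opNorm (WithLp.toLp 2 v)

lemma gr_le (A : SL2) (x : RP1) : gr A x ≤ N A := by
  have := nrm_mulVec_le A (evec x)
  rwa [nrm_evec, mul_one] at this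

lemma N_le {A : SL2} {C : ℝ} (hC : 0 ≤ C) (h : ∀ x, gr A x ≤ C) : N A ≤ C := by
  refine ContinuousLinearMap.opNorm_le_bound _ hC fun v => ?_
  have key : ∀ v : Fin 2 → ℝ, nrm ((A : Mat2).mulVec v) ≤ C * nrm v := by
    intro v
    by_cases hv : v = 0
    · subst hv; simp [nrm]
    · have h1 : Projectivization.mk ℝ v hv
          = Projectivization.mk ℝ (evec (Projectivization.mk ℝ v hv)) (evec_ne_zero _) :=
        (mk_evec _).symm
      rw [Projectivization.mk_eq_mk_iff'] at h1
      obtain ⟨t, ht⟩ := h1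
      set e := Projectivization.mk ℝ v hv
      rw [← ht, Matrix.mulVec_smul, nrm_smul, nrm_smul, nrm_evec, mul_one, mul_comm]
      exact mul_le_mul_of_nonneg_right (h e) (abs_nonneg t)
  have := key v.ofLp
  rw [nrm_eq_norm, nrm_eq_norm] at this
  exact this

lemma uvec_ne_zero (θ : ℝ) : uvec θ ≠ 0 := cos_sin_ne_zero θ

lemma exists_uvec_eq (θ : ℝ) : ∃ t : ℝ, uvec θ = t • evec (dir θ) ∧ |t| = 1 := by
  have h := mk_evec (dir θ)
  have h' : Projectivization.mk ℝ (uvec θ) (uvec_ne_zero θ)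
      = Projectivization.mk ℝ (evec (dir θ)) (evec_ne_zero _) := h.symm
  rw [Projectivization.mk_eq_mk_iff'] at h'
  obtain ⟨t, ht⟩ := h'
  refine ⟨t, ht.symm, ?_⟩
  have := nrm_uvec θ
  rwa [← ht, nrm_smul, nrm_evec, mul_one] at this

lemma gr_dir (A : SL2) (θ : ℝ) : gr A (dir θ) = nrm ((A : Mat2).mulVec (uvec θ)) := by
  obtain ⟨t, ht, ht'⟩ := exists_uvec_eq θ
  rw [ht, Matrix.mulVec_smul, nrm_smul, ht', one_mul, gr]

lemma continuous_dir : Continuous dir := continuous_coinduced_rng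

lemma continuous_gr (A : SL2) : Continuous (gr A) := by
  refine continuous_coinduced_dom.2 ?_
  have : gr A ∘ dir = fun θ => nrm ((A : Mat2).mulVec (uvec θ)) := funext (gr_dir A)
  rw [this]
  simp only [nrm, uvec, Matrix.mulVec, dotProduct, Fin.sum_univ_two, Matrix.cons_val_zero,
    Matrix.cons_val_one]
  fun_prop

lemma continuous_sd (x : RP1) : Continuous (sd x) := by
  refine continuous_coinduced_dom.2 ?_
  have : sd x ∘ dir = fun θ => |Real.sin (ang x - θ)| := by
    funext θ
    conv_lhs => rw [← dir_ang x, Function.comp, sd_dir_dir]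
  rw [this]
  fun_prop

instance : CompactSpace RP1 := by
  refine ⟨?_⟩
  have : (univ : Set RP1) = dir '' Icc 0 Real.pi :=
    (eq_univ_of_forall fun x =>
      (mem_image _ _ _).2 ⟨ang x, Ico_subset_Icc_self (ang_mem x), dir_ang x⟩).symm
  rw [this]
  exact isCompact_Icc.image continuous_dir

instance : BorelSpace RP1 := ⟨rfl⟩

lemma sd_self (x : RP1) : sd x x = 0 := by simp [sd_eq_sin]

instance : T2Space RP1 := by
  refine ⟨fun x y hxy => ?_⟩
  have hpos : 0 < sd x y := (sd_nonneg x y).lt_of_ne' fun h => hxy (sd_eq_zero h)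
  refine ⟨{z | sd x z < sd x y / 2}, {z | sd y z < sd x y / 2},
    isOpen_lt (continuous_sd x) continuous_const, isOpen_lt (continuous_sd y) continuous_const,
    by simpa [sd_self] using hpos, by simpa [sd_self] using hpos, ?_⟩
  rw [Set.disjoint_left]
  intro z hz hz'
  have := sd_triangle x z y
  rw [sd_comm z y] at this
  change sd x z < _ at hz
  change sd y z < _ at hz'
  linarith

/-- The metric `sd` induces the quotient topology. -/
lemma exists_ball_subset {U : Set RP1} (hU : IsOpen U) {x : RP1} (hx : x ∈ U) :
    ∃ ε > 0, ∀ y, sd x y < ε → y ∈ U := by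
  by_cases hne : (Uᶜ : Set RP1).Nonempty
  · obtain ⟨z, hz, hmin⟩ :=
      hU.isClosed_compl.isCompact.exists_isMinOn hne (continuous_sd x).continuousOn
    refine ⟨sd x z, (sd_nonneg x z).lt_of_ne' fun h => hz (sd_eq_zero h ▸ hx), fun y hy => ?_⟩
    by_contra hyU
    exact absurd (hmin hyU) (not_le.2 hy)
  · refine ⟨1, one_pos, fun y _ => ?_⟩
    by_contra hyU
    exact hne ⟨y, hyU⟩

lemma exists_gr_eq_N (A : SL2) : ∃ x, gr A x = N A := by
  have : Nonempty RP1 := ⟨dir 0⟩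
  obtain ⟨x, -, hx⟩ :=
    isCompact_univ.exists_isMaxOn univ_nonempty (continuous_gr A).continuousOn
  exact ⟨x, le_antisymm (gr_le A x) (N_le (gr_nonneg A x) fun y => hx (mem_univ y))⟩

lemma N_pos (A : SL2) : 0 < N A := (gr_pos A (dir 0)).trans_le (gr_le A _)

lemma N_mul_le (A B : SL2) : N (A * B) ≤ N A * N B := by
  refine N_le (mul_nonneg (N_pos A).le (N_pos B).le) fun x => ?_
  rw [gr_mul]
  exact mul_le_mul (gr_le _ _) (gr_le _ _) (gr_nonneg _ _) (N_pos A).le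

lemma gr_ge (A : SL2) (x : RP1) : 1 ≤ N A * gr A x := by
  obtain ⟨y, hy⟩ := exists_sd_eq_one x
  rw [← hy, ← sd_pact A]
  calc sd (pact A x) (pact A y) * (gr A x * gr A y)
      ≤ 1 * (gr A x * N A) := by
        apply mul_le_mul (sd_le_one _ _) _ (mul_nonneg (gr_nonneg _ _) (gr_nonneg _ _)) zero_le_one
        exact mul_le_mul_of_nonneg_left (gr_le _ _) (gr_nonneg _ _)
    _ = N A * gr A x := by ring

lemma gr_inv_mul (A : SL2) (x : RP1) : gr A⁻¹ (pact A x) * gr A x = 1 := by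
  rw [← gr_mul, inv_mul_cancel, gr_one]

lemma pact_pact_inv (A : SL2) (x : RP1) : pact A (pact A⁻¹ x) = x := by
  rw [← pact_mul, mul_inv_cancel, pact_one]

lemma pact_inv_pact (A : SL2) (x : RP1) : pact A⁻¹ (pact A x) = x := by
  rw [← pact_mul, inv_mul_cancel, pact_one]

lemma N_inv_le (A : SL2) : N A⁻¹ ≤ N A := by
  refine N_le (N_pos A).le fun x => ?_
  have h := gr_inv_mul A (pact A⁻¹ x)
  rw [pact_pact_inv] at h
  have h2 := gr_ge A (pact A⁻¹ x)
  have h3 := gr_pos A (pact A⁻¹ x)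
  rw [← h] at h2
  exact le_of_mul_le_mul_right h2 h3

lemma N_inv (A : SL2) : N A⁻¹ = N A :=
  le_antisymm (N_inv_le A) (by simpa using N_inv_le A⁻¹)

lemma N_one : N 1 = 1 := by
  obtain ⟨x, hx⟩ := exists_gr_eq_N 1
  rw [← hx, gr_one]

lemma one_le_N (A : SL2) : 1 ≤ N A := by
  have h := gr_ge A (dir 0)
  have h2 := gr_le A (dir 0)
  have h3 := N_pos A
  nlinarith

lemma sd_pact_le (A : SL2) (x y : RP1) : sd (pact A x) (pact A y) ≤ sd x y * N A ^ 2 := by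
  have h := sd_pact A x y
  have h1 := gr_ge A x
  have h2 := gr_ge A y
  have h3 : 1 ≤ (N A * gr A x) * (N A * gr A y) := one_le_mul_of_one_le_of_one_le h1 h2
  calc sd (pact A x) (pact A y) ≤ sd (pact A x) (pact A y) * ((N A * gr A x) * (N A * gr A y)) :=
        le_mul_of_one_le_right (sd_nonneg _ _) h3
    _ = sd x y * N A ^ 2 := by rw [← h]; ring

lemma continuous_pact (A : SL2) : Continuous (pact A) := by
  rw [continuous_iff_continuousAt]
  intro x
  rw [ContinuousAt, tendsto_nhds]
  intro U hU hx
  obtain ⟨ε, hε, hball⟩ := exists_ball_subset hU hx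
  have hN : 0 < N A ^ 2 := pow_pos (N_pos A) 2
  have hopen : IsOpen {y | sd x y < ε / N A ^ 2} := isOpen_lt (continuous_sd x) continuous_const
  filter_upwards [hopen.mem_nhds (by change sd x x < _; rw [sd_self]; positivity)] with y hy
  refine hball _ ((sd_pact_le A x y).trans_lt ?_)
  change sd x y < _ at hy
  rwa [lt_div_iff₀ hN] at hy

lemma measurable_pact (A : SL2) : Measurable (pact A) := (continuous_pact A).measurable

lemma exists_contracted (A : SL2) : ∃ x, gr A x = (N A)⁻¹ := by
  obtain ⟨y, hy⟩ := exists_gr_eq_N A⁻¹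
  refine ⟨pact A⁻¹ y, ?_⟩
  have h := gr_inv_mul A (pact A⁻¹ y)
  rw [pact_pact_inv, hy, N_inv] at h
  exact eq_inv_of_mul_eq_one_right h

/-- A most contracted direction of `A`. -/
def sdir (A : SL2) : RP1 := (exists_contracted A).choose

lemma gr_sdir (A : SL2) : gr A (sdir A) = (N A)⁻¹ := (exists_contracted A).choose_spec

/-- The expansion factor of `A` at `x` is at least `‖A‖` times the distance from `x` to the most
contracted direction. -/
lemma N_mul_sd_le (A : SL2) (x : RP1) : N A * sd x (sdir A) ≤ gr A x := by
  have h := sd_pact A x (sdir A)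
  rw [gr_sdir] at h
  have hN := N_pos A
  calc N A * sd x (sdir A) = sd (pact A x) (pact A (sdir A)) * gr A x := by
        rw [← h]; field_simp
    _ ≤ 1 * gr A x := mul_le_mul_of_nonneg_right (sd_le_one _ _) (gr_nonneg _ _)
    _ = gr A x := one_mul _

lemma gr_le_add (A : SL2) (x y : RP1) : gr A x ≤ gr A y + N A * sd x y := by
  set a := ang x
  set b := ang y
  have hx : evec x = Real.cos (a - b) • evec y + Real.sin (a - b) • uvec (b + Real.pi / 2) := by
    have ha : a = b + (a - b) := by ring
    show uvec a = _ • uvec b + _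
    ext i
    fin_cases i
    · simp only [uvec, Pi.add_apply, Pi.smul_apply, smul_eq_mul]
      show Real.cos a = _ * Real.cos b + _ * Real.cos _
      conv_lhs => rw [ha, Real.cos_add]
      rw [Real.cos_add_pi_div_two]; ring
    · simp only [uvec, Pi.add_apply, Pi.smul_apply, smul_eq_mul]
      show Real.sin a = _ * Real.sin b + _ * Real.sin _
      conv_lhs => rw [ha, Real.sin_add]
      rw [Real.sin_add_pi_div_two]; ring
  have h1 : gr A x ≤ |Real.cos (a - b)| * gr A y
      + |Real.sin (a - b)| * nrm ((A : Mat2).mulVec (uvec (b + Real.pi / 2))) := by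
    conv_lhs => rw [gr, hx, Matrix.mulVec_add, Matrix.mulVec_smul, Matrix.mulVec_smul]
    refine (nrm_add_le _ _).trans ?_
    rw [nrm_smul, nrm_smul, gr]
  have h2 := nrm_mulVec_le A (uvec (b + Real.pi / 2))
  rw [nrm_uvec, mul_one] at h2
  have h3 := Real.abs_cos_le_one (a - b)
  have h4 := gr_nonneg A y
  have h5 : sd x y = |Real.sin (a - b)| := sd_eq_sin x y
  rw [h5]
  have h6 := abs_nonneg (Real.sin (a - b))
  nlinarith [mul_le_mul_of_nonneg_left h2 h6]

lemma gr_le_of_sdir (A : SL2) (x : RP1) : gr A x ≤ N A * sd x (sdir A) + (N A)⁻¹ := by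
  have := gr_le_add A x (sdir A)
  rw [gr_sdir] at this
  linarith

/-! ### Quasi-multiplicativity of the norm -/

lemma N_le_mul_mul (B W : SL2) : N W ≤ N B * N (B * W) := by
  have := N_mul_le B⁻¹ (B * W)
  rwa [inv_mul_cancel_left, N_inv] at this

lemma N_le_mul_mul' (W V : SL2) : N W ≤ N (W * V) * N V := by
  have := N_mul_le (W * V) V⁻¹
  rwa [mul_inv_cancel_right, N_inv] at this

lemma sd_sdir_mul_le (B W : SL2) :
    sd (sdir W) (sdir (B * W)) ≤ N B / (N W * N (B * W)) := by
  have h := N_mul_sd_le (B * W) (sdir W)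
  rw [gr_mul, gr_sdir] at h
  have hW := N_pos W
  have hBW := N_pos (B * W)
  rw [le_div_iff₀ (mul_pos hW hBW)]
  have h2 : gr B (pact W (sdir W)) * (N W)⁻¹ ≤ N B * (N W)⁻¹ :=
    mul_le_mul_of_nonneg_right (gr_le _ _) (inv_nonneg.2 hW.le)
  calc sd (sdir W) (sdir (B * W)) * (N W * N (B * W))
      = (N (B * W) * sd (sdir W) (sdir (B * W))) * N W := by ring
    _ ≤ (N B * (N W)⁻¹) * N W := mul_le_mul_of_nonneg_right (h.trans h2) hW.le
    _ = N B := by field_simp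

lemma sd_sdir_mul_le_sq (B W : SL2) {M : ℝ} (hM : N B ≤ M) :
    sd (sdir W) (sdir (B * W)) ≤ M ^ 2 * (N W ^ 2)⁻¹ := by
  have hW := N_pos W
  have hBW := N_pos (B * W)
  have hB := N_pos B
  refine (sd_sdir_mul_le B W).trans ?_
  rw [← div_eq_mul_inv, div_le_div_iff₀ (mul_pos hW hBW) (by positivity)]
  have h := N_le_mul_mul B W
  calc N B * N W ^ 2 = N W * (N B * N W) := by ring
    _ ≤ N W * (N B * (N B * N (B * W))) := by gcongr
    _ = N B ^ 2 * (N W * N (B * W)) := by ring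
    _ ≤ M ^ 2 * (N W * N (B * W)) := by gcongr

/-- If the contracted direction of `W` is far from the image of the expanded direction of `V`
(which is the contracted direction of `V⁻¹`), then the norm of `W * V` is large. -/
lemma N_mul_ge (W V : SL2) : N W * N V * sd (sdir W) (sdir V⁻¹) ≤ N (W * V) := by
  have h := gr_inv_mul V (pact V⁻¹ (sdir V⁻¹))
  rw [pact_pact_inv, gr_sdir, N_inv] at h
  have hV := N_pos V
  have h1 : gr V (pact V⁻¹ (sdir V⁻¹)) = N V := by
    field_simp at h; linarith
  have h2 := gr_le (W * V) (pact V⁻¹ (sdir V⁻¹))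
  rw [gr_mul, pact_pact_inv, h1] at h2
  have h3 := N_mul_sd_le W (sdir V⁻¹)
  rw [sd_comm] at h3
  nlinarith

lemma N_mul_le_add (W V : SL2) :
    N (W * V) ≤ N W * N V * sd (sdir W) (sdir V⁻¹) + N V / N W + N W / N V := by
  have hW := N_pos W
  have hV := N_pos V
  have hs := sd_nonneg (sdir W) (sdir V⁻¹)
  refine N_le (by positivity) fun x => ?_
  set u := sdir V⁻¹
  have h := gr_inv_mul V (pact V⁻¹ u)
  rw [pact_pact_inv, gr_sdir, N_inv] at h
  have h1 : gr V (pact V⁻¹ u) = N V := by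
    field_simp at h; linarith
  have h2 := sd_pact V x (pact V⁻¹ u)
  rw [pact_pact_inv, h1] at h2
  have h3 : sd (pact V x) u * gr V x ≤ (N V)⁻¹ := by
    rw [← one_div, le_div_iff₀ hV, mul_assoc, h2]
    exact sd_le_one _ _
  have h4 := gr_le_add W (pact V x) u
  have h5 := gr_le_of_sdir W u
  rw [sd_comm] at h5
  have h6 := gr_le V x
  have h7 := gr_nonneg V x
  rw [gr_mul]
  calc gr W (pact V x) * gr V x
      ≤ (gr W u + N W * sd (pact V x) u) * gr V x := by gcongr
    _ = gr W u * gr V x + N W * (sd (pact V x) u * gr V x) := by ring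
    _ ≤ (N W * sd (sdir W) u + (N W)⁻¹) * N V + N W * (N V)⁻¹ := by
        gcongr
    _ = _ := by field_simp

/-- Along a chain `W (j+1) = B_j * W j` of uniformly bounded steps and exponentially growing norms,
the product can be truncated at norm about `L`, moving the most contracted direction by at most a
constant times `L ^ (κ - 2)`. -/
lemma exists_cut {c r κ M : ℝ} (hc : 0 < c) (hr : 1 < r) (hκ : 0 < κ) (hκ2 : κ ≤ 2) (hM : 1 ≤ M) :
    ∃ C : ℝ, 0 ≤ C ∧ ∀ (W : ℕ → SL2) (n : ℕ), W 0 = 1 →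
      (∀ j < n, N (W (j + 1) * (W j)⁻¹) ≤ M) → (∀ j ≤ n, c * r ^ j ≤ N (W j)) →
      ∀ L : ℝ, 1 ≤ L → L ≤ N (W n) → ∃ j ≤ n, L ≤ N (W j) ∧ N (W j) ≤ M * L ∧
        sd (sdir (W j)) (sdir (W n)) ≤ C * L ^ (κ - 2) := by
  set ρ : ℝ := r ^ (-κ) with hρ
  have hr0 : 0 < r := by linarith
  have hρ0 : 0 < ρ := Real.rpow_pos_of_pos hr0 _
  have hρ1 : ρ < 1 := Real.rpow_lt_one_of_one_lt_of_neg hr (by linarith)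
  have h1ρ : 0 < 1 - ρ := by linarith
  have hcκ : 0 < c ^ (-κ) := Real.rpow_pos_of_pos hc _
  refine ⟨M ^ 2 * c ^ (-κ) / (1 - ρ), by positivity, ?_⟩
  intro W n hW0 hstep hgrow L hL hLn
  have hL0 : 0 < L := by linarith
  classical
  have hex : ∃ j, ∀ i, j ≤ i → i ≤ n → L ≤ N (W i) := ⟨n, fun i h1 h2 => by
    obtain rfl := le_antisymm h1 h2; exact hLn⟩
  set j := Nat.find hex with hj
  have hjspec := Nat.find_spec hex
  have hjn : j ≤ n := Nat.find_min' hex (fun i h1 h2 => by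
    obtain rfl := le_antisymm h1 h2; exact hLn)
  refine ⟨j, hjn, hjspec j le_rfl hjn, ?_, ?_⟩
  · rcases Nat.eq_zero_or_pos j with h0 | hpos
    · rw [h0, hW0, N_one]
      nlinarith
    · have hlt : N (W (j - 1)) ≤ L := by
        by_contra hcon
        push Not at hcon
        refine Nat.find_min hex (m := j - 1) (by omega) fun i h1 h2 => ?_
        rcases Nat.eq_or_lt_of_le h1 with h | h
        · rw [← h]; exact hcon.le
        · exact hjspec i (by omega) h2
      have h1 := hstep (j - 1) (by omega)
      rw [Nat.sub_add_cancel hpos] at h1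
      have h2 := N_mul_le (W j * (W (j - 1))⁻¹) (W (j - 1))
      rw [inv_mul_cancel_right] at h2
      refine h2.trans ?_
      have := N_pos (W (j - 1))
      gcongr
  · have hstep' : ∀ i, j ≤ i → i < n →
        sd (sdir (W i)) (sdir (W (i + 1))) ≤ M ^ 2 * c ^ (-κ) * L ^ (κ - 2) * ρ ^ i := by
      intro i hji hin
      have h1 := sd_sdir_mul_le_sq (W (i + 1) * (W i)⁻¹) (W i) (hstep i hin)
      rw [inv_mul_cancel_right] at h1
      refine h1.trans ?_
      have hLi := hjspec i hji hin.le
      have hgi := hgrow i hin.le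
      have hNi := N_pos (W i)
      have e1 : (N (W i) ^ 2)⁻¹ = N (W i) ^ (κ - 2) * N (W i) ^ (-κ) := by
        rw [← Real.rpow_add hNi, ← Real.rpow_natCast, ← Real.rpow_neg hNi.le]
        congr 1; push_cast; ring
      have e2 : N (W i) ^ (κ - 2) ≤ L ^ (κ - 2) :=
        Real.rpow_le_rpow_of_nonpos hL0 hLi (by linarith)
      have e3 : N (W i) ^ (-κ) ≤ c ^ (-κ) * ρ ^ i := by
        refine (Real.rpow_le_rpow_of_nonpos (by positivity) hgi (by linarith)).trans_eq ?_
        rw [Real.mul_rpow hc.le (by positivity), hρ, ← Real.rpow_natCast, ← Real.rpow_natCast,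
          ← Real.rpow_mul hr0.le, ← Real.rpow_mul hr0.le, mul_comm (-κ)]
      rw [e1]
      calc M ^ 2 * (N (W i) ^ (κ - 2) * N (W i) ^ (-κ))
          ≤ M ^ 2 * (L ^ (κ - 2) * (c ^ (-κ) * ρ ^ i)) := by gcongr
        _ = _ := by ring
    set D := M ^ 2 * c ^ (-κ) * L ^ (κ - 2) with hD
    have hD0 : 0 ≤ D := by positivity
    have hsum : ∀ k, j + k ≤ n →
        sd (sdir (W j)) (sdir (W (j + k))) ≤ D * ((1 - ρ ^ k) / (1 - ρ)) := by
      intro k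
      induction k with
      | zero => intro _; simp [sd_self]
      | succ k ih =>
        intro hk
        have h1 := ih (by omega)
        have h2 := hstep' (j + k) (by omega) (by omega)
        have h3 : ρ ^ (j + k) ≤ ρ ^ k := pow_le_pow_of_le_one hρ0.le hρ1.le (by omega)
        have h4 := sd_triangle (sdir (W j)) (sdir (W (j + k))) (sdir (W (j + (k + 1))))
        have h5 : D * ((1 - ρ ^ (k + 1)) / (1 - ρ)) = D * ((1 - ρ ^ k) / (1 - ρ)) + D * ρ ^ k := by
          field_simp; ring
        rw [h5]
        refine h4.trans (add_le_add h1 (h2.trans ?_))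
        gcongr
    have h := hsum (n - j) (by omega)
    rw [Nat.add_sub_cancel' hjn] at h
    refine h.trans ?_
    have h6 : (1 - ρ ^ (n - j)) / (1 - ρ) ≤ 1 / (1 - ρ) := by
      gcongr
      linarith [pow_nonneg hρ0.le (n - j)]
    calc D * ((1 - ρ ^ (n - j)) / (1 - ρ)) ≤ D * (1 / (1 - ρ)) := by gcongr
      _ = _ := by rw [hD]; ring

lemma wordProd_append {ι : Type} (A : ι → SL2) (w v : List ι) :
    wordProd A (w ++ v) = wordProd A w * wordProd A v := by simp [wordProd]

lemma wordProd_nil {ι : Type} (A : ι → SL2) : wordProd A [] = 1 := rfl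

lemma wordProd_cons {ι : Type} (A : ι → SL2) (i : ι) (w : List ι) :
    wordProd A (i :: w) = A i * wordProd A w := by simp [wordProd]

/-- A common bound for the norms of the generators. -/
def bnd {ι : Type} [Fintype ι] (A : ι → SL2) : ℝ := 1 + ∑ i, N (A i)

lemma N_le_bnd {ι : Type} [Fintype ι] (A : ι → SL2) (i : ι) : N (A i) ≤ bnd A := by
  have := Finset.single_le_sum (f := fun i => N (A i)) (fun i _ => (N_pos (A i)).le)
    (Finset.mem_univ i)
  unfold bnd
  linarith

lemma one_le_bnd {ι : Type} [Fintype ι] (A : ι → SL2) : 1 ≤ bnd A := by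
  have := Finset.sum_nonneg (s := Finset.univ) fun i (_ : i ∈ Finset.univ) => (N_pos (A i)).le
  unfold bnd
  linarith

lemma N_wordProd_le {ι : Type} (A : ι → SL2) {M : ℝ} (hM : ∀ i, N (A i) ≤ M) (w : List ι) :
    N (wordProd A w) ≤ M ^ w.length := by
  induction w with
  | nil => simp [wordProd_nil, N_one]
  | cons i w ih =>
    rw [wordProd_cons, List.length_cons, pow_succ']
    exact (N_mul_le _ _).trans (mul_le_mul (hM i) ih (N_pos _).le ((N_pos _).le.trans (hM i)))

lemma UniformlyHyperbolic.exists_growth {ι : Type} {A : ι → SL2} (h : UniformlyHyperbolic A) :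
    ∃ c r : ℝ, 0 < c ∧ 1 < r ∧ ∀ w : List ι, c * r ^ w.length ≤ N (wordProd A w) := by
  obtain ⟨c, hc, r, hr, H⟩ := h
  refine ⟨min c 1, r, lt_min hc one_pos, hr, fun w => ?_⟩
  by_cases hw : w = []
  · subst hw
    simp [wordProd_nil, N_one]
  · refine le_trans ?_ (H w hw)
    gcongr
    exact min_le_left _ _

/-- If the contracted direction of `W` is within `L⁻²` of the expanded image direction of `V`,
then `L` is bounded. Truncating `W` and `V` at norm about `L` around the junction gives a word whose
product has norm at most `L ^ κ` up to a constant, while uniform hyperbolicity forces at least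
`L ^ (2κ)`. -/
lemma exists_scale_bound {ι : Type} [Fintype ι] {A : ι → SL2} (h : UniformlyHyperbolic A) :
    ∃ κ K : ℝ, 0 < κ ∧ 0 < K ∧ ∀ (w v : List ι) (L : ℝ), 1 ≤ L → L ≤ N (wordProd A w) →
      L ≤ N (wordProd A v) →
      sd (sdir (wordProd A w)) (sdir (wordProd A v)⁻¹) ≤ L ^ (-2 : ℝ) → L ^ κ ≤ K := by
  obtain ⟨c, r, hc, hr, hgrow⟩ := h.exists_growth
  set M : ℝ := bnd A + r with hMdef
  have hbM : 1 ≤ bnd A := one_le_bnd A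
  have hMi : ∀ i, N (A i) ≤ M := fun i => (N_le_bnd A i).trans (by linarith)
  have hrM : r ≤ M := by linarith
  have hM1 : 1 < M := by linarith
  have hM0 : 0 < M := by linarith
  set κ : ℝ := Real.log r / (2 * Real.log M) with hκdef
  have hlr : 0 < Real.log r := Real.log_pos hr
  have hlM : 0 < Real.log M := Real.log_pos hM1
  have hκ : 0 < κ := by positivity
  have hκ2 : κ ≤ 2 := by
    rw [hκdef, div_le_iff₀ (by positivity)]
    have := Real.log_le_log (by linarith) hrM
    linarith
  have hMr : M ^ (2 * κ) = r := by
    rw [Real.rpow_def_of_pos hM0, hκdef]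
    have : Real.log M * (2 * (Real.log r / (2 * Real.log M))) = Real.log r := by field_simp
    rw [this, Real.exp_log (by linarith)]
  obtain ⟨C, hC, hcut⟩ := exists_cut (c := c) (r := r) (κ := κ) (M := M) hc hr hκ hκ2 hM1.le
  set K : ℝ := M ^ 2 * (2 * C + 1) + 2 * M with hK
  have hK0 : 0 < K := by positivity
  refine ⟨κ, K / c, hκ, by positivity, ?_⟩
  intro w v L hL hLw hLv hsd
  have hL0 : 0 < L := by linarith
  obtain ⟨j, hj, hj1, hj2, hj3⟩ := hcut (fun j => wordProd A (w.drop (w.length - j))) w.length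
    (by simp [wordProd_nil])
    (by
      intro j hj
      have e : w.drop (w.length - (j + 1))
          = w[w.length - (j + 1)] :: w.drop (w.length - j) := by
        rw [List.drop_eq_getElem_cons (by omega)]
        congr 2
        omega
      simp only [e, wordProd_cons, mul_inv_cancel_right]
      exact hMi _)
    (by
      intro j hj
      have := hgrow (w.drop (w.length - j))
      rwa [List.length_drop, Nat.sub_sub_self hj] at this)
    L hL (by simpa using hLw)
  obtain ⟨k, hk, hk1, hk2, hk3⟩ := hcut (fun j => (wordProd A (v.take j))⁻¹) v.length
    (by simp [wordProd_nil])
    (by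
      intro j hj
      have e : v.take (j + 1) = v.take j ++ [v[j]] := (List.take_append_getElem hj).symm
      simp only [e, wordProd_append, mul_inv_rev, inv_inv, inv_mul_cancel_right, N_inv]
      simpa [wordProd_cons, wordProd_nil] using hMi v[j])
    (by
      intro j hj
      have := hgrow (v.take j)
      rwa [List.length_take, min_eq_left hj, ← N_inv] at this)
    L hL (by simpa [N_inv] using hLv)
  simp only [Nat.sub_self, List.drop_zero, List.take_length, N_inv] at hj1 hj2 hj3 hk1 hk2 hk3
  set W := wordProd A (w.drop (w.length - j)) with hW
  set V := wordProd A (v.take k) with hV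
  have hLκ : L ^ (-2 : ℝ) ≤ L ^ (κ - 2) := Real.rpow_le_rpow_of_exponent_le hL (by linarith)
  have hsd' : sd (sdir W) (sdir V⁻¹) ≤ (2 * C + 1) * L ^ (κ - 2) := by
    have t1 := sd_triangle (sdir W) (sdir (wordProd A w)) (sdir V⁻¹)
    have t2 := sd_triangle (sdir (wordProd A w)) (sdir (wordProd A v)⁻¹) (sdir V⁻¹)
    rw [sd_comm (sdir (wordProd A v)⁻¹)] at t2
    linarith
  have hWp := N_pos W
  have hVp := N_pos V
  have hup : N (W * V) ≤ K * L ^ κ := by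
    refine (N_mul_le_add W V).trans ?_
    have b1 : N V / N W ≤ M := by
      rw [div_le_iff₀ hWp]
      exact hk2.trans (by gcongr)
    have b2 : N W / N V ≤ M := by
      rw [div_le_iff₀ hVp]
      exact hj2.trans (by gcongr)
    have b3 : 1 ≤ L ^ κ := Real.one_le_rpow hL hκ.le
    have b4 : L * L * L ^ (κ - 2) = L ^ κ := by
      rw [← sq, ← Real.rpow_natCast, ← Real.rpow_add hL0]
      congr 1; push_cast; ring
    have b5 : N W * N V * sd (sdir W) (sdir V⁻¹) ≤ M ^ 2 * (2 * C + 1) * L ^ κ := by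
      calc N W * N V * sd (sdir W) (sdir V⁻¹)
          ≤ (M * L) * (M * L) * ((2 * C + 1) * L ^ (κ - 2)) := by
            gcongr
            exact sd_nonneg _ _
        _ = M ^ 2 * (2 * C + 1) * (L * L * L ^ (κ - 2)) := by ring
        _ = _ := by rw [b4]
    rw [hK]
    nlinarith
  have hlow : c * L ^ (2 * κ) ≤ N (W * V) := by
    have g := hgrow (w.drop (w.length - j) ++ v.take k)
    rw [wordProd_append] at g
    refine le_trans ?_ g
    gcongr
    have hj4 := hj1.trans (N_wordProd_le A hMi (w.drop (w.length - j)))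
    rw [List.length_drop, Nat.sub_sub_self hj] at hj4
    calc L ^ (2 * κ) ≤ (M ^ j) ^ (2 * κ) := Real.rpow_le_rpow hL0.le hj4 (by positivity)
      _ = r ^ j := by
        rw [← Real.rpow_natCast, ← Real.rpow_mul hM0.le, mul_comm, Real.rpow_mul hM0.le, hMr,
          Real.rpow_natCast]
      _ ≤ _ := by
        apply pow_le_pow_right₀ hr.le
        rw [List.length_append, List.length_drop]
        omega
  have hLκ0 : 0 < L ^ κ := Real.rpow_pos_of_pos hL0 _
  have e : L ^ (2 * κ) = L ^ κ * L ^ κ := by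
    rw [← Real.rpow_add hL0]; congr 1; ring
  rw [e] at hlow
  rw [le_div_iff₀ hc]
  have := hlow.trans hup
  nlinarith

lemma mul_le_sq_mul {x y z l : ℝ} (hx : 0 ≤ x) (hz : 0 ≤ z) (h : y ≤ x * z) (hl : x ≤ l) :
    x * y ≤ l ^ 2 * z := by
  calc x * y ≤ x * (x * z) := mul_le_mul_of_nonneg_left h hx
    _ = x ^ 2 * z := by ring
    _ ≤ l ^ 2 * z := by gcongr

/-- For a uniformly hyperbolic family the norm is multiplicative up to a constant. -/
theorem quasi_mul {ι : Type} [Fintype ι] {A : ι → SL2} (h : UniformlyHyperbolic A) :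
    ∃ c₀ : ℝ, 0 < c₀ ∧ c₀ ≤ 1 ∧ ∀ w v : List ι,
      c₀ * (N (wordProd A w) * N (wordProd A v)) ≤ N (wordProd A w * wordProd A v) := by
  obtain ⟨κ, K, hκ, hK, main⟩ := exists_scale_bound h
  set L₀ : ℝ := max 1 ((K) ^ (κ⁻¹)) with hL₀
  have hL₀1 : 1 ≤ L₀ := le_max_left _ _
  have hL₀0 : 0 < L₀ := by linarith
  refine ⟨(L₀ ^ 2)⁻¹, by positivity, inv_le_one_of_one_le₀ (one_le_pow₀ hL₀1), fun w v => ?_⟩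
  set W := wordProd A w
  set V := wordProd A v
  have hW := one_le_N W
  have hV := one_le_N V
  have hWV := N_pos (W * V)
  set ε : ℝ := N (W * V) / (N W * N V) with hε
  have hε0 : 0 < ε := by positivity
  have hε1 : ε ≤ 1 := by
    rw [hε, div_le_one (by positivity)]; exact N_mul_le _ _
  have hsqrt : 1 ≤ Real.sqrt (1 / ε) := by
    rw [Real.one_le_sqrt, le_div_iff₀ hε0, one_mul]; exact hε1
  set L : ℝ := min (min (N W) (N V)) (Real.sqrt (1 / ε)) with hL
  have hL1 : 1 ≤ L := le_min (le_min hW hV) hsqrt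
  have hL0 : 0 < L := by linarith
  have hsd : sd (sdir W) (sdir V⁻¹) ≤ L ^ (-2 : ℝ) := by
    have h1 : sd (sdir W) (sdir V⁻¹) ≤ ε := by
      rw [hε, le_div_iff₀ (by positivity)]
      have := N_mul_ge W V
      linarith
    have h2 : L ^ 2 ≤ 1 / ε := by
      have := pow_le_pow_left₀ hL0.le (min_le_right _ _ : L ≤ Real.sqrt (1 / ε)) 2
      rwa [Real.sq_sqrt (by positivity)] at this
    refine h1.trans ?_
    rw [Real.rpow_neg hL0.le, ← one_div]
    have : L ^ (2 : ℝ) = L ^ 2 := by norm_cast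
    rw [this, le_div_iff₀ (by positivity)]
    rw [le_div_iff₀ hε0] at h2
    linarith
  have hb := main w v L hL1 ((min_le_left _ _).trans (min_le_left _ _))
    ((min_le_left _ _).trans (min_le_right _ _)) hsd
  have hLL₀ : L ≤ L₀ := by
    refine le_trans ?_ (le_max_right _ _)
    calc L = (L ^ κ) ^ κ⁻¹ := by
          rw [← Real.rpow_mul hL0.le, mul_inv_cancel₀ hκ.ne', Real.rpow_one]
      _ ≤ _ := Real.rpow_le_rpow (by positivity) hb (by positivity)
  rw [inv_mul_le_iff₀ (by positivity)]
  rw [hL, min_le_iff, min_le_iff] at hLL₀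
  rcases hLL₀ with (h1 | h1) | h1
  · exact mul_le_sq_mul (N_pos W).le hWV.le (N_le_mul_mul W V) h1
  · rw [mul_comm (N W)]
    exact mul_le_sq_mul (N_pos V).le hWV.le ((N_le_mul_mul' W V).trans_eq (mul_comm _ _)) h1
  · have h2 : 1 / ε ≤ L₀ ^ 2 := by
      have := pow_le_pow_left₀ (Real.sqrt_nonneg _) h1 2
      rwa [Real.sq_sqrt (by positivity)] at this
    have h3 : 1 / ε = N W * N V / N (W * V) := by rw [hε, one_div_div]
    rw [h3, div_le_iff₀ hWV] at h2
    exact h2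

/-! ### Stationary measures without atoms live where all products expand fully -/

/-- Points `V x` with `x` at distance at least `t` from the most contracted direction of `V` are
expanded by every `W` by a factor comparable to `‖W‖`, provided `‖V‖` is large in terms of `t`. -/
lemma gr_ge_of_far {W V : SL2} {c₀ t : ℝ} (hc : 0 < c₀) (hc1 : c₀ ≤ 1)
    (hq : c₀ * (N W * N V) ≤ N (W * V)) {x : RP1} (ht : 0 < t) (hx : t ≤ sd x (sdir V))
    (hV : 2 ≤ c₀ * t * N V ^ 2) : c₀ / 3 * N W ≤ gr W (pact V x) := by
  have h1 := gr_mul W V x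
  have h2 := gr_le_of_sdir V x
  have h3 := N_mul_sd_le (W * V) x
  have h4 := sd_sdir_mul_le W V
  have h5 := sd_triangle x (sdir (W * V)) (sdir V)
  rw [sd_comm (sdir (W * V))] at h5
  have hn := N_pos V
  have hw := N_pos W
  have hP := N_pos (W * V)
  have hg := gr_pos V x
  generalize N V = n at *
  generalize N W = w at *
  generalize N (W * V) = P at *
  generalize sd x (sdir V) = τ at *
  generalize gr V x = g at *
  generalize gr W (pact V x) = y at *
  generalize gr (W * V) x = z at *
  generalize sd x (sdir (W * V)) = σ at *
  have hτ : 0 < τ := by linarith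
  have i1 : n⁻¹ ≤ c₀ * τ * n / 2 := by
    rw [inv_le_iff_one_le_mul₀ hn]
    have : c₀ * t * n ^ 2 ≤ c₀ * τ * n ^ 2 := by gcongr
    nlinarith
  have i2 : P * (w / (n * P)) = w * n⁻¹ := by field_simp
  have i3 : P * τ ≤ P * σ + w * n⁻¹ := by
    rw [← i2, ← mul_add]
    exact mul_le_mul_of_nonneg_left (by linarith) hP.le
  have i4 : c₀ * (w * n) * τ ≤ P * τ := by gcongr
  have i5 : w * n⁻¹ ≤ w * (c₀ * τ * n / 2) := by gcongr
  have i6 : w * c₀ * τ * n / 2 ≤ y * g := by nlinarith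
  have i7 : g ≤ 3 / 2 * (n * τ) := by
    have : c₀ * τ * n ≤ 1 * τ * n := by gcongr
    linarith
  have hy : 0 ≤ y := by
    by_contra hneg
    push Not at hneg
    have : 0 < w * c₀ * τ * n / 2 := by positivity
    nlinarith
  have i8 : y * g ≤ y * (3 / 2 * (n * τ)) := by gcongr
  have hnτ : 0 < n * τ := by positivity
  have i9 : (c₀ / 3 * w) * (n * τ) ≤ y * (n * τ) := by nlinarith
  exact le_of_mul_le_mul_right i9 hnτ

/-- The stationarity equation evaluated on a measurable set, in real numbers. -/
lemma IsStationary.real_eq {ι : Type} [Fintype ι] {A : ι → SL2} {p : ι → ℝ} (hp : ∀ i, 0 < p i)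
    {ν : Measure RP1} [IsProbabilityMeasure ν] (hν : IsStationary A p ν) {E : Set RP1}
    (hE : MeasurableSet E) : ν.real E = ∑ i, p i * ν.real (pact (A i) ⁻¹' E) := by
  have h : ν E = ∑ i, ENNReal.ofReal (p i) * ν (pact (A i) ⁻¹' E) := by
    conv_lhs => rw [hν]
    rw [Measure.finsetSum_apply]
    refine Finset.sum_congr rfl fun i _ => ?_
    rw [Measure.smul_apply, Measure.map_apply (measurable_pact _) hE, smul_eq_mul]
  rw [measureReal_def, h, ENNReal.toReal_sum fun i _ =>
    ENNReal.mul_ne_top ENNReal.ofReal_ne_top (measure_ne_top _ _)]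
  refine Finset.sum_congr rfl fun i _ => ?_
  rw [ENNReal.toReal_mul, ENNReal.toReal_ofReal (hp i).le, measureReal_def]

/-- Iterating stationarity along words until the norm first exceeds `R` decomposes `ν` over
finitely many words of norm between `R` and `R` times a constant. -/
lemma exists_decomp {ι : Type} [Fintype ι] {A : ι → SL2} (h : UniformlyHyperbolic A) {p : ι → ℝ}
    (hp : ∀ i, 0 < p i) {ν : Measure RP1} [IsProbabilityMeasure ν] (hν : IsStationary A p ν)
    {R : ℝ} (hR : 1 ≤ R) :
    ∃ (κ : Type) (_ : Fintype κ) (a : κ → ℝ) (u : κ → List ι), (∀ k, 0 ≤ a k) ∧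
      (∀ k, R ≤ N (wordProd A (u k)) ∧ N (wordProd A (u k)) ≤ bnd A * R) ∧
      ∀ E, MeasurableSet E →
        ν.real E = ∑ k, a k * ν.real (pact (wordProd A (u k)) ⁻¹' E) := by
  obtain ⟨c, r, hc, hr, hgrow⟩ := h.exists_growth
  have key : ∀ (f : ℕ) (w : List ι), R ≤ c * r ^ (w.length + f) →
      N (wordProd A w) ≤ bnd A * R →
      ∃ (κ : Type) (_ : Fintype κ) (a : κ → ℝ) (u : κ → List ι), (∀ k, 0 ≤ a k) ∧
        (∀ k, R ≤ N (wordProd A (u k)) ∧ N (wordProd A (u k)) ≤ bnd A * R) ∧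
        ∀ E, MeasurableSet E → ν.real (pact (wordProd A w) ⁻¹' E)
          = ∑ k, a k * ν.real (pact (wordProd A (u k)) ⁻¹' E) := by
    intro f
    induction f with
    | zero =>
      intro w hw hw2
      exact ⟨Unit, inferInstance, fun _ => 1, fun _ => w, fun _ => zero_le_one,
        fun _ => ⟨hw.trans (hgrow w), hw2⟩, fun E _ => by simp⟩
    | succ f ih =>
      intro w hw hw2
      by_cases hcase : R ≤ N (wordProd A w)
      · exact ⟨Unit, inferInstance, fun _ => 1, fun _ => w, fun _ => zero_le_one,
          fun _ => ⟨hcase, hw2⟩, fun E _ => by simp⟩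
      push Not at hcase
      have hi : ∀ i : ι, wordProd A (w ++ [i]) = wordProd A w * A i := fun i => by
        simp [wordProd]
      have := fun i => ih (w ++ [i])
        (by rw [List.length_append, List.length_singleton, add_assoc, add_comm 1 f]; exact hw)
        (by
          rw [hi, mul_comm (bnd A)]
          refine (N_mul_le _ _).trans ?_
          have := N_le_bnd A i
          have := N_pos (A i)
          gcongr)
      choose κ inst a u ha hu hE using this
      refine ⟨Σ i, κ i, inferInstance, fun k => p k.1 * a k.1 k.2, fun k => u k.1 k.2,
        fun k => mul_nonneg (hp _).le (ha _ _), fun k => hu _ _, fun E hEm => ?_⟩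
      rw [hν.real_eq hp ((measurable_pact _) hEm), Fintype.sum_sigma]
      refine Finset.sum_congr rfl fun i _ => ?_
      have hset : pact (A i) ⁻¹' (pact (wordProd A w) ⁻¹' E)
          = pact (wordProd A (w ++ [i])) ⁻¹' E := by
        ext x
        simp only [mem_preimage, hi, pact_mul]
      rw [hset, hE i E hEm, Finset.mul_sum]
      exact Finset.sum_congr rfl fun k _ => by ring
  obtain ⟨f, hf⟩ := pow_unbounded_of_one_lt (R / c) hr
  rw [div_lt_iff₀ hc] at hf
  obtain ⟨κ, inst, a, u, ha, hu, hE⟩ := key f [] (by simp; linarith) (by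
    rw [wordProd_nil, N_one]
    exact one_le_mul_of_one_le_of_one_le (one_le_bnd A) hR)
  refine ⟨κ, inst, a, u, ha, hu, fun E hEm => ?_⟩
  rw [← hE E hEm, wordProd_nil]
  congr 1
  ext x
  simp [pact_one]

/-- By compactness, a measure without atoms gives uniformly small mass to small balls. -/
lemma exists_small_ball {ν : Measure RP1} [IsProbabilityMeasure ν] (hna : ∀ x, ν {x} = 0)
    {η : ℝ} (hη : 0 < η) : ∃ t > 0, ∀ z, ν.real {x | sd x z < t} ≤ η := by
  have hopen : ∀ (z : RP1) (t : ℝ), IsOpen {x | sd x z < t} := fun z t => by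
    have : {x | sd x z < t} = {x | sd z x < t} := by ext x; rw [mem_ofPred_eq, sd_comm]; rfl
    rw [this]
    exact isOpen_lt (continuous_sd z) continuous_const
  have hloc : ∀ z, ∃ t > 0, ν.real {x | sd x z < t + t} < η := by
    intro z
    have hanti : Antitone fun n : ℕ => {x | sd x z < 1 / ((n : ℝ) + 1)} := by
      intro m n hmn x hx
      have hmn' : (m : ℝ) ≤ n := by exact_mod_cast hmn
      change sd x z < _ at hx
      change sd x z < _
      exact hx.trans_le (one_div_le_one_div_of_le (by positivity) (by linarith))
    have hinter : ⋂ n : ℕ, {x | sd x z < 1 / ((n : ℝ) + 1)} = {z} := by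
      ext x
      simp only [mem_iInter, mem_singleton_iff]
      constructor
      · intro hx
        by_contra hne
        have hpos : 0 < sd x z := (sd_nonneg _ _).lt_of_ne' fun h => hne (sd_eq_zero h)
        obtain ⟨n, hn⟩ := exists_nat_one_div_lt hpos
        exact absurd (hx n) (not_lt.2 hn.le)
      · rintro rfl n
        change sd x x < _
        rw [sd_self]; positivity
    have htend := tendsto_measure_iInter_atTop (μ := ν)
      (fun n : ℕ => ((hopen z (1 / ((n : ℝ) + 1))).measurableSet.nullMeasurableSet)) hanti
      ⟨0, measure_ne_top _ _⟩
    rw [hinter, hna z] at htend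
    have hev := htend.eventually (gt_mem_nhds (ENNReal.ofReal_pos.2 hη))
    obtain ⟨n, hn⟩ := hev.exists
    refine ⟨1 / ((n : ℝ) + 1) / 2, by positivity, ?_⟩
    rw [add_halves, measureReal_def]
    exact (ENNReal.lt_ofReal_iff_toReal_lt (measure_ne_top _ _)).1 hn
  choose t ht hsmall using hloc
  obtain ⟨s, hs⟩ := isCompact_univ.elim_finite_subcover (fun z => {x | sd x z < t z})
    (fun z => hopen z _) (fun x _ => mem_iUnion.2 ⟨x, by
      change sd x x < _
      rw [sd_self]; exact ht x⟩)
  have hsne : s.Nonempty := by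
    obtain ⟨z, hz⟩ := mem_iUnion.1 (hs (mem_univ (dir 0)))
    obtain ⟨hz', -⟩ := mem_iUnion.1 hz
    exact ⟨z, hz'⟩
  obtain ⟨z₀, hz₀, hmin⟩ := s.exists_min_image t hsne
  refine ⟨t z₀, ht z₀, fun z => ?_⟩
  obtain ⟨y, hy⟩ := mem_iUnion.1 (hs (mem_univ z))
  obtain ⟨hys, hzy⟩ := mem_iUnion.1 hy
  change sd z y < t y at hzy
  refine le_trans (measureReal_mono ?_) (hsmall y).le
  intro x hx
  change sd x z < t z₀ at hx
  change sd x y < t y + t y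
  have := sd_triangle x z y
  have := hmin y hys
  linarith

/-- The points at which every product of the family expands by at least `c` times its norm. -/
def goodSet {ι : Type} (A : ι → SL2) (c : ℝ) : Set RP1 :=
  {y | ∀ w : List ι, c * N (wordProd A w) ≤ gr (wordProd A w) y}

lemma measurableSet_goodSet {ι : Type} (A : ι → SL2) (c : ℝ) : MeasurableSet (goodSet A c) := by
  have : goodSet A c = ⋂ w : List ι, {y | c * N (wordProd A w) ≤ gr (wordProd A w) y} := by
    ext y
    rw [mem_iInter]
    rfl
  rw [this]
  exact (isClosed_iInter fun w => isClosed_le continuous_const (continuous_gr _)).measurableSet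

/-- Almost every point is expanded by every product up to a uniform factor: in the decomposition of
`ν` over words `u` of large norm, the image under `u` of any point outside a small ball around the
most contracted direction of `u` is such a point, and small balls have small mass. -/
theorem exists_goodSet {ι : Type} [Fintype ι] {A : ι → SL2} (h : UniformlyHyperbolic A)
    {p : ι → ℝ} (hp : ∀ i, 0 < p i) {ν : Measure RP1} [IsProbabilityMeasure ν]
    (hν : IsStationary A p ν) (hna : ∀ x, ν {x} = 0) :
    ∃ c > 0, ν.real (goodSet A c)ᶜ = 0 := by
  obtain ⟨c₀, hc₀, hc₁, hq⟩ := quasi_mul h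
  refine ⟨c₀ / 3, by positivity, le_antisymm (le_of_forall_pos_le_add fun η hη => ?_)
    measureReal_nonneg⟩
  obtain ⟨t, ht, hball⟩ := exists_small_ball hna hη
  obtain ⟨κ, inst, a, u, ha, hu, hE⟩ := exists_decomp h hp hν
    (R := max 1 (2 / (c₀ * t))) (le_max_left _ _)
  have hsum : ∑ k, a k = 1 := by
    have := hE univ MeasurableSet.univ
    simpa using this.symm
  rw [hE _ (measurableSet_goodSet A _).compl, zero_add]
  calc ∑ k, a k * ν.real (pact (wordProd A (u k)) ⁻¹' (goodSet A (c₀ / 3))ᶜ)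
      ≤ ∑ k, a k * η := by
        refine Finset.sum_le_sum fun k _ => mul_le_mul_of_nonneg_left ?_ (ha k)
        refine le_trans (measureReal_mono ?_) (hball (sdir (wordProd A (u k))))
        intro x hx
        by_contra hfar
        change ¬ sd x _ < t at hfar
        push Not at hfar
        refine hx fun w => gr_ge_of_far hc₀ hc₁ (hq w (u k)) ht hfar ?_
        have h1 := (hu k).1
        have h2 := (le_max_left _ _).trans h1
        have h3 := (le_max_right _ _).trans h1
        rw [div_le_iff₀ (by positivity)] at h3
        have h4 : 0 < c₀ * t := by positivity
        nlinarith
    _ = η := by rw [← Finset.sum_mul, hsum, one_mul]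

/-! ### Dyadic arcs -/

/-- The index of the arc of level `m` containing `x`. The floor is harmless as a natural number,
since angles are taken in `[0, π)`. -/
def idx (m : ℕ) (x : RP1) : ℕ := ⌊2 ^ m * (ang x / Real.pi)⌋₊

lemma ang_div_mem (x : RP1) : 0 ≤ ang x / Real.pi ∧ ang x / Real.pi < 1 :=
  ⟨div_nonneg (ang_mem x).1 Real.pi_pos.le, (div_lt_one Real.pi_pos).2 (ang_mem x).2⟩

lemma idx_lt (m : ℕ) (x : RP1) : idx m x < 2 ^ m := by
  obtain ⟨h0, h1⟩ := ang_div_mem x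
  rw [idx, Nat.floor_lt (by positivity)]
  push_cast
  have : (0 : ℝ) < 2 ^ m := by positivity
  nlinarith

lemma mem_dyadic_iff {m k : ℕ} (hk : k < 2 ^ m) (x : RP1) : x ∈ dyadic m k ↔ idx m x = k := by
  have hπ := Real.pi_pos
  have h2 : (0 : ℝ) < 2 ^ m := by positivity
  have hiff : ang x ∈ Ico (Real.pi * k / 2 ^ m) (Real.pi * (k + 1) / 2 ^ m) ↔ idx m x = k := by
    rw [idx, Nat.floor_eq_iff (mul_nonneg h2.le (ang_div_mem x).1), mem_Ico]
    have e : 2 ^ m * (ang x / Real.pi) = 2 ^ m * ang x / Real.pi := by ring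
    rw [e, div_le_iff₀ h2, lt_div_iff₀ h2, le_div_iff₀ hπ, div_lt_iff₀ hπ]
    rw [mul_comm Real.pi, mul_comm Real.pi, mul_comm (ang x)]
  rw [← hiff]
  constructor
  · rintro ⟨θ, hθ, rfl⟩
    rw [ang_dir]
    · exact hθ
    · have hk' : (k : ℝ) + 1 ≤ 2 ^ m := by exact_mod_cast hk
      refine ⟨le_trans (by positivity) hθ.1, hθ.2.trans_le ?_⟩
      rw [div_le_iff₀ h2]
      gcongr
  · intro h
    exact ⟨ang x, h, dir_ang x⟩

lemma measurableSet_dyadic (m k : ℕ) : MeasurableSet (dyadic m k) := by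
  unfold dyadic
  generalize Real.pi * k / 2 ^ m = a
  generalize Real.pi * (k + 1) / 2 ^ m = b
  have : Ico a b = ⋃ n : ℕ, Icc a (b - 1 / ((n : ℝ) + 1)) := by
    ext θ
    simp only [mem_iUnion, mem_Ico, mem_Icc]
    constructor
    · rintro ⟨h1, h2⟩
      obtain ⟨n, hn⟩ := exists_nat_one_div_lt (sub_pos.2 h2)
      exact ⟨n, h1, by linarith⟩
    · rintro ⟨n, h1, h2⟩
      have : (0 : ℝ) < 1 / ((n : ℝ) + 1) := by positivity
      exact ⟨h1, by linarith⟩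
  rw [this, image_iUnion]
  exact MeasurableSet.iUnion fun n => (isCompact_Icc.image continuous_dir).isClosed.measurableSet

/-- The arc of level `n` containing an arc of level `n + m`. -/
lemma idx_add (n m : ℕ) (x : RP1) : idx (n + m) x / 2 ^ m = idx n x := by
  have h := Nat.floor_div_natCast (2 ^ (n + m) * (ang x / Real.pi)) (2 ^ m)
  rw [idx, idx, ← h]
  congr 1
  push_cast
  rw [pow_add]
  field_simp

/-- Arcs `k`, `k'` of level `n` at cyclic distance at most `D`. -/
def near (n D k k' : ℕ) : Prop :=
  |(k : ℤ) - k'| ≤ D ∨ (2 : ℤ) ^ n - D ≤ |(k : ℤ) - k'|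

lemma near_comm {n D k k' : ℕ} : near n D k k' ↔ near n D k' k := by
  unfold near
  rw [abs_sub_comm]

open Classical in
lemma card_near_le {n k : ℕ} (D : ℕ) (hk : k < 2 ^ n) :
    ((Finset.range (2 ^ n)).filter fun k' => near n D k k').card ≤ 4 * D + 2 := by
  have hsub : ((Finset.range (2 ^ n)).filter fun k' => near n D k k')
      ⊆ (Finset.Icc (k - D) (k + D) ∪ Finset.Ico (2 ^ n - D) (2 ^ n)) ∪ Finset.range (D + 1) := by
    intro k' hk'
    rw [Finset.mem_filter, Finset.mem_range] at hk'
    simp only [Finset.mem_union, Finset.mem_Icc, Finset.mem_Ico, Finset.mem_range]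
    obtain ⟨h1, h2⟩ := hk'
    have e : ((2 ^ n : ℕ) : ℤ) = 2 ^ n := by push_cast; rfl
    unfold near at h2
    rw [← e] at h2
    generalize 2 ^ n = X at *
    rcases h2 with h2 | h2
    · rw [abs_le] at h2
      omega
    · rw [le_abs] at h2
      omega
  refine (Finset.card_le_card hsub).trans ((Finset.card_union_le _ _).trans ?_)
  have := Finset.card_union_le (Finset.Icc (k - D) (k + D)) (Finset.Ico (2 ^ n - D) (2 ^ n))
  simp only [Nat.card_Icc, Nat.card_Ico, Finset.card_range] at *
  omega

/-- Points at distance `O(2^{-n})` lie in arcs of level `n` at bounded cyclic distance. -/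
lemma near_of_sd_le {n D : ℕ} {C : ℝ} (hD : C + 1 ≤ D) {x y : RP1}
    (h : 2 ^ n * sd x y ≤ C) : near n D (idx n x) (idx n y) := by
  have hX : (0 : ℝ) < 2 ^ n := by positivity
  have hπ := Real.pi_pos
  wlog hxy : ang y ≤ ang x generalizing x y
  · rw [near_comm]
    exact this (by rwa [sd_comm]) (le_of_not_ge hxy)
  obtain ⟨hx0, hx1⟩ := ang_mem x
  obtain ⟨hy0, hy1⟩ := ang_mem y
  set s := ang x - ang y with hs
  have hs0 : 0 ≤ s := by linarith
  have hsπ : s < Real.pi := by linarith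
  have hsin : sd x y = Real.sin s := by
    rw [sd_eq_sin, abs_of_nonneg (Real.sin_nonneg_of_nonneg_of_le_pi hs0 hsπ.le)]
  rw [hsin] at h
  have fx := Nat.floor_le (mul_nonneg hX.le (ang_div_mem x).1)
  have fx' := Nat.lt_floor_add_one (2 ^ n * (ang x / Real.pi))
  have fy := Nat.floor_le (mul_nonneg hX.le (ang_div_mem y).1)
  have fy' := Nat.lt_floor_add_one (2 ^ n * (ang y / Real.pi))
  change (idx n x : ℝ) ≤ _ at fx
  change _ < (idx n x : ℝ) + 1 at fx'
  change (idx n y : ℝ) ≤ _ at fy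
  change _ < (idx n y : ℝ) + 1 at fy'
  have hdiff : 2 ^ n * (ang x / Real.pi) - 2 ^ n * (ang y / Real.pi) = 2 ^ n * (s / Real.pi) := by
    rw [hs]; ring
  have hnn : 0 ≤ 2 ^ n * (s / Real.pi) := by positivity
  rcases le_total s (Real.pi / 2) with hle | hle
  · left
    have h1 := Real.mul_le_sin hs0 hle
    have h2 : 2 ^ n * (s / Real.pi) ≤ C / 2 := by
      have : 2 ^ n * (2 / Real.pi * s) ≤ 2 ^ n * Real.sin s := by gcongr
      have e : 2 ^ n * (2 / Real.pi * s) = 2 * (2 ^ n * (s / Real.pi)) := by ring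
      linarith
    have h3 : |(idx n x : ℝ) - idx n y| ≤ D := by
      rw [abs_le]; constructor <;> linarith
    exact_mod_cast h3
  · right
    have h1 := Real.mul_le_sin (x := Real.pi - s) (by linarith) (by linarith)
    rw [Real.sin_pi_sub] at h1
    have h2 : 2 ^ n - 2 ^ n * (s / Real.pi) ≤ C / 2 := by
      have : 2 ^ n * (2 / Real.pi * (Real.pi - s)) ≤ 2 ^ n * Real.sin s := by gcongr
      have e : 2 ^ n * (2 / Real.pi * (Real.pi - s)) = 2 * (2 ^ n - 2 ^ n * (s / Real.pi)) := by
        field_simp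
      linarith
    have h4 : 0 ≤ 2 ^ n - 2 ^ n * (s / Real.pi) := by
      have : s / Real.pi ≤ 1 := (div_le_one hπ).2 hsπ.le
      nlinarith
    have h3 : (2 : ℝ) ^ n - D ≤ |(idx n x : ℝ) - idx n y| := by
      rw [le_abs]; left; linarith
    exact_mod_cast h3

lemma sd_le_of_idx_eq {m : ℕ} {x y : RP1} (h : idx m x = idx m y) :
    2 ^ m * sd x y ≤ Real.pi := by
  have hX : (0 : ℝ) < 2 ^ m := by positivity
  have hπ := Real.pi_pos
  have fx := Nat.floor_le (mul_nonneg hX.le (ang_div_mem x).1)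
  have fx' := Nat.lt_floor_add_one (2 ^ m * (ang x / Real.pi))
  have fy := Nat.floor_le (mul_nonneg hX.le (ang_div_mem y).1)
  have fy' := Nat.lt_floor_add_one (2 ^ m * (ang y / Real.pi))
  unfold idx at h
  rw [h] at fx fx'
  have h1 : |2 ^ m * (ang x / Real.pi) - 2 ^ m * (ang y / Real.pi)| ≤ 1 := by
    rw [abs_le]; constructor <;> linarith
  have e : 2 ^ m * (ang x / Real.pi) - 2 ^ m * (ang y / Real.pi)
      = (2 ^ m / Real.pi) * (ang x - ang y) := by ring
  rw [e, abs_mul, abs_of_pos (by positivity), div_mul_eq_mul_div, div_le_one hπ] at h1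
  rw [sd_eq_sin]
  exact (mul_le_mul_of_nonneg_left Real.abs_sin_le_abs hX.le).trans h1

/-! ### Submultiplicativity of the `L^q` sums -/

lemma measurable_idx (m : ℕ) : Measurable (idx m) := by
  refine measurable_to_countable' fun k => ?_
  by_cases hk : k < 2 ^ m
  · have : idx m ⁻¹' {k} = dyadic m k := by
      ext x
      rw [mem_dyadic_iff hk, mem_preimage, mem_singleton_iff]
    rw [this]
    exact measurableSet_dyadic m k
  · have : idx m ⁻¹' {k} = ∅ := by
      ext x
      simp only [mem_preimage, mem_singleton_iff, mem_empty_iff_false, iff_false]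
      rintro rfl
      exact hk (idx_lt m x)
    rw [this]
    exact MeasurableSet.empty

lemma lqSum_eq (ν : Measure RP1) (q : ℝ) (m : ℕ) :
    lqSum ν q m = ∑ k ∈ Finset.range (2 ^ m), ν.real (idx m ⁻¹' {k}) ^ q := by
  refine Finset.sum_congr rfl fun k hk => ?_
  have : idx m ⁻¹' {k} = dyadic m k := by
    ext x
    rw [mem_dyadic_iff (Finset.mem_range.1 hk), mem_preimage, mem_singleton_iff]
  rw [this, measureReal_def]

lemma sum_fiber {ν : Measure RP1} [IsProbabilityMeasure ν] {f : RP1 → ℕ} (hf : Measurable f)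
    {E : Set RP1} (hE : MeasurableSet E) (s : Finset ℕ) :
    ∑ k ∈ s, ν.real (E ∩ f ⁻¹' {k}) = ν.real (E ∩ f ⁻¹' s) := by
  have hset : E ∩ f ⁻¹' s = ⋃ k ∈ s, E ∩ f ⁻¹' {k} := by
    ext x
    simp
  rw [hset, measureReal_biUnion_finset]
  · intro i _ j _ hij
    refine Set.disjoint_left.2 fun x hx hx' => hij ?_
    exact hx.2.symm.trans hx'.2
  · exact fun k _ => hE.inter (hf (measurableSet_singleton k))

lemma rpow_pred_mul {x q : ℝ} (hx : 0 ≤ x) (hq : 1 < q) : x ^ (q - 1) * x = x ^ q := by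
  have h := Real.rpow_add_one' hx (y := q - 1) (by linarith)
  rw [← h, sub_add_cancel]

lemma sum_rpow_le {α : Type*} (s : Finset α) {b : α → ℝ} (hb : ∀ j ∈ s, 0 ≤ b j) {q : ℝ}
    (hq : 1 < q) : ∑ j ∈ s, b j ^ q ≤ (∑ j ∈ s, b j) ^ q := by
  have hB : 0 ≤ ∑ j ∈ s, b j := Finset.sum_nonneg hb
  rw [← rpow_pred_mul hB hq, Finset.mul_sum]
  refine Finset.sum_le_sum fun j hj => ?_
  rw [← rpow_pred_mul (hb j hj) hq]
  refine mul_le_mul_of_nonneg_right ?_ (hb j hj)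
  exact Real.rpow_le_rpow (hb j hj) (Finset.single_le_sum hb hj) (by linarith)

/-- The weighted Hölder inequality, raised to the power `q`. -/
lemma weighted_rpow_le {α : Type*} (s : Finset α) {w f : α → ℝ} (hw : ∀ i, 0 ≤ w i)
    (hf : ∀ i, 0 ≤ f i) {q : ℝ} (hq : 1 < q) :
    (∑ i ∈ s, w i * f i) ^ q ≤ (∑ i ∈ s, w i) ^ (q - 1) * ∑ i ∈ s, w i * f i ^ q := by
  have h := Real.inner_le_weight_mul_Lp_of_nonneg s hq.le w f hw hf
  have hW : 0 ≤ ∑ i ∈ s, w i := Finset.sum_nonneg fun i _ => hw i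
  have hF : 0 ≤ ∑ i ∈ s, w i * f i ^ q :=
    Finset.sum_nonneg fun i _ => mul_nonneg (hw i) (Real.rpow_nonneg (hf i) _)
  have hL : 0 ≤ ∑ i ∈ s, w i * f i := Finset.sum_nonneg fun i _ => mul_nonneg (hw i) (hf i)
  have hq0 : q ≠ 0 := by linarith
  refine (Real.rpow_le_rpow hL h (by linarith)).trans_eq ?_
  rw [Real.mul_rpow (Real.rpow_nonneg hW _) (Real.rpow_nonneg hF _), ← Real.rpow_mul hW,
    ← Real.rpow_mul hF, inv_mul_cancel₀ hq0, Real.rpow_one]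
  congr 2
  field_simp

lemma lqSum_nonneg (ν : Measure RP1) (q : ℝ) (m : ℕ) : 0 ≤ lqSum ν q m :=
  Finset.sum_nonneg fun _ _ => Real.rpow_nonneg ENNReal.toReal_nonneg _

/-- If preimages under `T` of arcs of level `M` meet boundedly many arcs of level `m`, then the
`L^q` sum of level `M` of `T_* ν` is controlled by the one of level `m` of `ν`. -/
lemma sum_preimage_le {ν : Measure RP1} [IsProbabilityMeasure ν] {T : RP1 → RP1}
    (hT : Measurable T) {m M D : ℕ}
    (hnear : ∀ x y, idx M (T x) = idx M (T y) → near m D (idx m x) (idx m y)) {q : ℝ}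
    (hq : 1 < q) :
    ∑ J ∈ Finset.range (2 ^ M), ν.real (T ⁻¹' (idx M ⁻¹' {J})) ^ q
      ≤ (4 * D + 2 : ℝ) ^ (q - 1) * lqSum ν q m := by
  classical
  have hMT : Measurable (idx M ∘ T) := (measurable_idx M).comp hT
  have hE : ∀ J, MeasurableSet (T ⁻¹' (idx M ⁻¹' {J})) := fun J =>
    hMT (measurableSet_singleton J)
  have hI : ∀ I, MeasurableSet (idx m ⁻¹' {I}) := fun I =>
    measurable_idx m (measurableSet_singleton I)
  have hC : (0 : ℝ) ≤ (4 * D + 2 : ℝ) ^ (q - 1) := Real.rpow_nonneg (by positivity) _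
  have step : ∀ J, ν.real (T ⁻¹' (idx M ⁻¹' {J})) ^ q ≤ (4 * D + 2 : ℝ) ^ (q - 1) *
      ∑ I ∈ Finset.range (2 ^ m), ν.real (T ⁻¹' (idx M ⁻¹' {J}) ∩ idx m ⁻¹' {I}) ^ q := by
    intro J
    have hnn : ∀ I, 0 ≤ ν.real (T ⁻¹' (idx M ⁻¹' {J}) ∩ idx m ⁻¹' {I}) ^ q := fun I =>
      Real.rpow_nonneg measureReal_nonneg _
    rcases (T ⁻¹' (idx M ⁻¹' {J})).eq_empty_or_nonempty with h0 | ⟨x₀, hx₀⟩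
    · rw [h0, measureReal_empty, Real.zero_rpow (by linarith)]
      exact mul_nonneg hC (Finset.sum_nonneg fun I _ => by rw [← h0]; exact hnn I)
    set s := (Finset.range (2 ^ m)).filter fun k' => near m D (idx m x₀) k' with hs
    have hsub : T ⁻¹' (idx M ⁻¹' {J}) ∩ idx m ⁻¹' s = T ⁻¹' (idx M ⁻¹' {J}) := by
      refine inter_eq_left.2 fun x hx => ?_
      change idx m x ∈ (s : Set ℕ)
      rw [Finset.mem_coe, hs, Finset.mem_filter, Finset.mem_range]
      exact ⟨idx_lt m x, hnear x₀ x (Eq.trans hx₀ (Eq.symm hx))⟩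
    have h1 := sum_fiber (ν := ν) (measurable_idx m) (hE J) s
    rw [hsub] at h1
    rw [← h1]
    refine (Real.rpow_sum_le_const_mul_sum_rpow_of_nonneg s hq.le
      fun _ _ => measureReal_nonneg).trans ?_
    refine mul_le_mul ?_ (Finset.sum_le_sum_of_subset_of_nonneg (Finset.filter_subset _ _)
      fun I _ _ => hnn I) (Finset.sum_nonneg fun I _ => hnn I) hC
    have hcard : (s.card : ℝ) ≤ 4 * D + 2 := by
      exact_mod_cast card_near_le D (idx_lt m x₀)
    exact Real.rpow_le_rpow (by positivity) hcard (by linarith)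
  refine (Finset.sum_le_sum fun J _ => step J).trans ?_
  rw [← Finset.mul_sum, Finset.sum_comm, lqSum_eq]
  refine mul_le_mul_of_nonneg_left (Finset.sum_le_sum fun I _ => ?_) hC
  refine (sum_rpow_le _ (fun _ _ => measureReal_nonneg) hq).trans ?_
  refine Real.rpow_le_rpow (Finset.sum_nonneg fun _ _ => measureReal_nonneg) ?_ (by linarith)
  have h2 := sum_fiber (ν := ν) hMT (hI I) (Finset.range (2 ^ M))
  have h3 : ∀ J, T ⁻¹' (idx M ⁻¹' {J}) ∩ idx m ⁻¹' {I}
      = idx m ⁻¹' {I} ∩ (idx M ∘ T) ⁻¹' {J} := fun J => inter_comm _ _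
  simp only [h3]
  rw [h2]
  exact measureReal_mono inter_subset_left

/-- Submultiplicativity for a measure that decomposes as a finite combination of images under maps
`T k` sending almost everything into boundedly many arcs of level `n`, and pulling arcs of level
`n + m` back into boundedly many arcs of level `m`. -/
lemma lqSum_add_le_of_decomp {ν : Measure RP1} [IsProbabilityMeasure ν] {κ : Type} [Fintype κ]
    {a : κ → ℝ} (ha : ∀ k, 0 ≤ a k) {T : κ → RP1 → RP1} (hT : ∀ k, Measurable (T k))
    (hdec : ∀ E, MeasurableSet E → ν.real E = ∑ k, a k * ν.real (T k ⁻¹' E))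
    {G : Set RP1} (hG : ν.real Gᶜ = 0) {n m D : ℕ}
    (hin : ∀ k, ∀ x ∈ G, ∀ y ∈ G, near n D (idx n (T k x)) (idx n (T k y)))
    (hout : ∀ k x y, idx (n + m) (T k x) = idx (n + m) (T k y) → near m D (idx m x) (idx m y))
    {q : ℝ} (hq : 1 < q) :
    lqSum ν q (n + m) ≤ ((4 * D + 2 : ℝ) ^ (q - 1) * (4 * D + 2 : ℝ) ^ q) *
      (lqSum ν q n * lqSum ν q m) := by
  classical
  set C : ℝ := 4 * D + 2 with hCdef
  have hC : 0 ≤ C := by positivity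
  have hmeas : ∀ l k, MeasurableSet (idx l ⁻¹' {k}) := fun l k =>
    measurable_idx l (measurableSet_singleton k)
  -- the weights of the maps that charge the arc `I`, and their total mass
  set b : κ → ℕ → ℝ := fun k I => if ν.real (T k ⁻¹' (idx n ⁻¹' {I})) = 0 then 0 else a k with hb
  set P : ℕ → ℝ := fun I => ∑ k, b k I with hP
  have hb0 : ∀ k I, 0 ≤ b k I := fun k I => by
    simp only [hb]
    split_ifs
    exacts [le_rfl, ha k]
  have hP0 : ∀ I, 0 ≤ P I := fun I => Finset.sum_nonneg fun k _ => hb0 k I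
  set s : ℕ → Finset ℕ := fun I => (Finset.range (2 ^ n)).filter fun I' => near n D I I' with hs
  have hPle : ∀ I, P I ≤ ∑ I' ∈ s I, ν.real (idx n ⁻¹' {I'}) := by
    intro I
    have h1 := sum_fiber (ν := ν) (measurable_idx n) MeasurableSet.univ (s I)
    simp only [univ_inter] at h1
    rw [h1, hdec _ (measurable_idx n (Finset.measurableSet _))]
    refine Finset.sum_le_sum fun k _ => ?_
    simp only [hb]
    split_ifs with h0
    · exact mul_nonneg (ha k) measureReal_nonneg
    have hne : (T k ⁻¹' (idx n ⁻¹' {I}) ∩ G).Nonempty := by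
      rw [nonempty_iff_ne_empty]
      intro hempty
      refine h0 (le_antisymm ?_ measureReal_nonneg)
      rw [← hG]
      refine measureReal_mono fun x hx hxG => ?_
      have : x ∈ T k ⁻¹' (idx n ⁻¹' {I}) ∩ G := ⟨hx, hxG⟩
      rw [hempty] at this
      exact this
    obtain ⟨x₀, hx₀, hx₀G⟩ := hne
    have hx₀' : idx n (T k x₀) = I := hx₀
    have hfull : ν.real (T k ⁻¹' (idx n ⁻¹' (s I : Set ℕ)))ᶜ = 0 := by
      refine le_antisymm ?_ measureReal_nonneg
      rw [← hG]
      refine measureReal_mono (compl_subset_compl.2 fun x hx => ?_)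
      change idx n (T k x) ∈ (s I : Set ℕ)
      rw [Finset.mem_coe, hs, Finset.mem_filter, Finset.mem_range, ← hx₀']
      exact ⟨idx_lt n _, hin k x₀ hx₀G x hx⟩
    rw [probReal_compl_eq_one_sub
      (hT k (measurable_idx n (Finset.measurableSet _)))] at hfull
    rw [show ν.real (T k ⁻¹' (idx n ⁻¹' (s I : Set ℕ))) = 1 by linarith, mul_one]
  -- summing the `q`-th powers of the masses over all arcs of level `n`
  have hPsum : ∑ I ∈ Finset.range (2 ^ n), P I ^ q ≤ C ^ q * lqSum ν q n := by
    have h1 : ∀ I ∈ Finset.range (2 ^ n), P I ^ q ≤ C ^ (q - 1) *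
        ∑ I' ∈ Finset.range (2 ^ n),
          if near n D I I' then ν.real (idx n ⁻¹' {I'}) ^ q else 0 := by
      intro I hI
      refine (Real.rpow_le_rpow (hP0 I) (hPle I) (by linarith)).trans ?_
      refine (Real.rpow_sum_le_const_mul_sum_rpow_of_nonneg _ hq.le
        fun _ _ => measureReal_nonneg).trans ?_
      rw [← Finset.sum_filter]
      refine mul_le_mul_of_nonneg_right ?_
        (Finset.sum_nonneg fun _ _ => Real.rpow_nonneg measureReal_nonneg _)
      have hcard : ((s I).card : ℝ) ≤ C := by
        rw [hCdef]
        exact_mod_cast card_near_le D (Finset.mem_range.1 hI)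
      exact Real.rpow_le_rpow (by positivity) hcard (by linarith)
    refine (Finset.sum_le_sum h1).trans ?_
    rw [← Finset.mul_sum, Finset.sum_comm, ← rpow_pred_mul hC hq, mul_assoc, lqSum_eq]
    refine mul_le_mul_of_nonneg_left ?_ (Real.rpow_nonneg hC _)
    rw [Finset.mul_sum]
    refine Finset.sum_le_sum fun I' hI' => ?_
    rw [← Finset.sum_filter, Finset.sum_const, nsmul_eq_mul]
    refine mul_le_mul_of_nonneg_right ?_ (Real.rpow_nonneg measureReal_nonneg _)
    simp only [near_comm (k' := I')]
    rw [hCdef]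
    exact_mod_cast card_near_le D (Finset.mem_range.1 hI')
  -- Hölder's inequality on each arc of level `n + m`
  set c : κ → ℕ → ℝ := fun k J => ν.real (T k ⁻¹' (idx (n + m) ⁻¹' {J})) with hc
  have hc0 : ∀ k J, 0 ≤ c k J := fun k J => measureReal_nonneg
  have hJ : ∀ J, ν.real (idx (n + m) ⁻¹' {J}) ^ q
      ≤ P (J / 2 ^ m) ^ (q - 1) * ∑ k, b k (J / 2 ^ m) * c k J ^ q := by
    intro J
    have h1 : ν.real (idx (n + m) ⁻¹' {J}) = ∑ k, b k (J / 2 ^ m) * c k J := by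
      rw [hdec _ (hmeas _ _)]
      refine Finset.sum_congr rfl fun k _ => ?_
      simp only [hb]
      split_ifs with h0
      · have : c k J = 0 := by
          refine le_antisymm ?_ (hc0 k J)
          rw [← h0]
          refine measureReal_mono fun x hx => ?_
          have hx' : idx (n + m) (T k x) = J := hx
          change idx n (T k x) = J / 2 ^ m
          rw [← hx', idx_add]
        rw [zero_mul]
        change a k * c k J = 0
        rw [this, mul_zero]
      · rfl
    rw [h1]
    exact weighted_rpow_le _ (fun k => hb0 k _) (fun k => hc0 k J) hq
  rw [lqSum_eq ν q (n + m)]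
  refine (Finset.sum_le_sum fun J _ => hJ J).trans ?_
  rw [← Finset.sum_fiberwise_of_maps_to (s := Finset.range (2 ^ (n + m)))
    (t := Finset.range (2 ^ n)) (g := fun J => J / 2 ^ m) fun J hJm => by
      rw [Finset.mem_range] at hJm ⊢
      rw [Nat.div_lt_iff_lt_mul (by positivity), ← pow_add]
      exact hJm]
  have hI : ∀ I ∈ Finset.range (2 ^ n),
      ∑ J ∈ (Finset.range (2 ^ (n + m))).filter (fun J => J / 2 ^ m = I),
        P (J / 2 ^ m) ^ (q - 1) * ∑ k, b k (J / 2 ^ m) * c k J ^ q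
      ≤ P I ^ q * (C ^ (q - 1) * lqSum ν q m) := by
    intro I _
    calc _ = ∑ J ∈ (Finset.range (2 ^ (n + m))).filter (fun J => J / 2 ^ m = I),
        P I ^ (q - 1) * ∑ k, b k I * c k J ^ q :=
          Finset.sum_congr rfl fun J hJ' => by rw [(Finset.mem_filter.1 hJ').2]
      _ = P I ^ (q - 1) * ∑ k, b k I *
          ∑ J ∈ (Finset.range (2 ^ (n + m))).filter (fun J => J / 2 ^ m = I), c k J ^ q := by
        rw [← Finset.mul_sum, Finset.sum_comm]
        simp only [Finset.mul_sum]
      _ ≤ P I ^ (q - 1) * ∑ k, b k I * (C ^ (q - 1) * lqSum ν q m) := by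
        refine mul_le_mul_of_nonneg_left (Finset.sum_le_sum fun k _ =>
          mul_le_mul_of_nonneg_left ?_ (hb0 k I)) (Real.rpow_nonneg (hP0 I) _)
        refine le_trans (Finset.sum_le_sum_of_subset_of_nonneg (Finset.filter_subset _ _)
          fun J _ _ => Real.rpow_nonneg (hc0 k J) _) ?_
        exact sum_preimage_le (hT k) (hout k) hq
      _ = P I ^ q * (C ^ (q - 1) * lqSum ν q m) := by
        rw [← Finset.sum_mul, ← mul_assoc, ← rpow_pred_mul (hP0 I) hq]
  refine (Finset.sum_le_sum hI).trans ?_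
  rw [← Finset.sum_mul]
  have h0 : 0 ≤ C ^ (q - 1) * lqSum ν q m :=
    mul_nonneg (Real.rpow_nonneg hC _) (lqSum_nonneg _ _ _)
  refine (mul_le_mul_of_nonneg_right hPsum h0).trans_eq (by ring)

/-- The `L^q` sums of an atomless stationary measure are submultiplicative up to a constant. The
decomposing maps are the products along words of norm about `2^(n/2)`: they send the good set into
boundedly many arcs of level `n`, and contract by no more than about `2^(-n)`. -/
theorem exists_lqSum_add_le {ι : Type} [Fintype ι] {A : ι → SL2} (h : UniformlyHyperbolic A)
    {p : ι → ℝ} (hp : ∀ i, 0 < p i) {ν : Measure RP1} [IsProbabilityMeasure ν]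
    (hν : IsStationary A p ν) (hna : ∀ x, ν {x} = 0) {q : ℝ} (hq : 1 < q) :
    ∃ C ≥ (1 : ℝ), ∀ n m, lqSum ν q (n + m) ≤ C * (lqSum ν q n * lqSum ν q m) := by
  obtain ⟨c, hc, hG⟩ := exists_goodSet h hp hν hna
  obtain ⟨D, hD⟩ := exists_nat_ge (max (bnd A ^ 2 * Real.pi) (1 / c ^ 2) + 1)
  have hD1 : bnd A ^ 2 * Real.pi + 1 ≤ D := le_trans (by gcongr; exact le_max_left _ _) hD
  have hD2 : 1 / c ^ 2 + 1 ≤ D := le_trans (by gcongr; exact le_max_right _ _) hD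
  have h1 : (1 : ℝ) ≤ 4 * D + 2 := by
    have : (0 : ℝ) ≤ D := Nat.cast_nonneg D
    linarith
  refine ⟨(4 * D + 2 : ℝ) ^ (q - 1) * (4 * D + 2 : ℝ) ^ q,
    one_le_mul_of_one_le_of_one_le (Real.one_le_rpow h1 (by linarith))
      (Real.one_le_rpow h1 (by linarith)), fun n m => ?_⟩
  have hn : (1 : ℝ) ≤ 2 ^ n := one_le_pow₀ (by norm_num)
  obtain ⟨κ, inst, a, u, ha, hu, hE⟩ := exists_decomp h hp hν
    (R := Real.sqrt (2 ^ n)) (Real.one_le_sqrt.2 hn)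
  have hsq : Real.sqrt (2 ^ n) ^ 2 = 2 ^ n := Real.sq_sqrt (by positivity)
  have hlow : ∀ k, (2 : ℝ) ^ n ≤ N (wordProd A (u k)) ^ 2 := fun k => by
    rw [← hsq]
    exact pow_le_pow_left₀ (Real.sqrt_nonneg _) (hu k).1 2
  have hupp : ∀ k, N (wordProd A (u k)) ^ 2 ≤ bnd A ^ 2 * 2 ^ n := fun k => by
    rw [← hsq, ← mul_pow]
    exact pow_le_pow_left₀ (N_pos _).le (hu k).2 2
  refine lqSum_add_le_of_decomp ha (fun k => measurable_pact (wordProd A (u k))) hE hG ?_ ?_ hq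
  · intro k x hx y hy
    refine near_of_sd_le hD2 ?_
    have hgx := hx (u k)
    have hgy := hy (u k)
    have e := sd_pact (wordProd A (u k)) x y
    have hs1 := sd_le_one x y
    have hl := hlow k
    have hs0 := sd_nonneg (pact (wordProd A (u k)) x) (pact (wordProd A (u k)) y)
    have hN := N_pos (wordProd A (u k))
    generalize N (wordProd A (u k)) = w at *
    generalize sd (pact (wordProd A (u k)) x) (pact (wordProd A (u k)) y) = σ at *
    rw [le_div_iff₀ (by positivity)]
    calc 2 ^ n * σ * c ^ 2 ≤ w ^ 2 * σ * c ^ 2 := by gcongr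
      _ = σ * ((c * w) * (c * w)) := by ring
      _ ≤ σ * (gr (wordProd A (u k)) x * gr (wordProd A (u k)) y) := by
        have : 0 ≤ c * w := by positivity
        gcongr
        exact gr_nonneg _ _
      _ ≤ 1 := e.trans_le hs1
  · intro k x y hxy
    refine near_of_sd_le hD1 ?_
    have hd := sd_le_of_idx_eq hxy
    have e := sd_pact (wordProd A (u k)) x y
    have hgx := gr_le (wordProd A (u k)) x
    have hgy := gr_le (wordProd A (u k)) y
    have hgx0 := gr_nonneg (wordProd A (u k)) x
    have hgy0 := gr_nonneg (wordProd A (u k)) y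
    have hl := hupp k
    have hs0 := sd_nonneg (pact (wordProd A (u k)) x) (pact (wordProd A (u k)) y)
    have hN := N_pos (wordProd A (u k))
    rw [← e]
    generalize N (wordProd A (u k)) = w at *
    generalize sd (pact (wordProd A (u k)) x) (pact (wordProd A (u k)) y) = σ at *
    generalize gr (wordProd A (u k)) x = g at *
    generalize gr (wordProd A (u k)) y = g' at *
    calc 2 ^ m * (σ * (g * g')) ≤ 2 ^ m * (σ * (w * w)) := by gcongr
      _ = 2 ^ m * (σ * w ^ 2) := by ring
      _ ≤ 2 ^ m * (σ * (bnd A ^ 2 * 2 ^ n)) := by gcongr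
      _ = bnd A ^ 2 * (2 ^ (n + m) * σ) := by rw [pow_add]; ring
      _ ≤ bnd A ^ 2 * Real.pi := by gcongr

/-! ### Existence of the limit -/

lemma sum_idx {ν : Measure RP1} [IsProbabilityMeasure ν] (m : ℕ) :
    ∑ k ∈ Finset.range (2 ^ m), ν.real (idx m ⁻¹' {k}) = 1 := by
  have h := sum_fiber (ν := ν) (measurable_idx m) MeasurableSet.univ (Finset.range (2 ^ m))
  simp only [univ_inter] at h
  rw [h]
  have : idx m ⁻¹' (Finset.range (2 ^ m) : Set ℕ) = univ :=
    eq_univ_of_forall fun x => by simpa using idx_lt m x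
  rw [this, probReal_univ]

lemma lqSum_le_one {ν : Measure RP1} [IsProbabilityMeasure ν] {q : ℝ} (hq : 1 < q) (m : ℕ) :
    lqSum ν q m ≤ 1 := by
  rw [lqSum_eq]
  refine (sum_rpow_le _ (fun _ _ => measureReal_nonneg) hq).trans_eq ?_
  rw [sum_idx, Real.one_rpow]

/-- Some arc of level `m` has mass at least `2^{-m}`. -/
lemma le_lqSum {ν : Measure RP1} [IsProbabilityMeasure ν] {q : ℝ} (hq : 1 < q) (m : ℕ) :
    (2 : ℝ) ^ (-(m * q)) ≤ lqSum ν q m := by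
  have hX : (0 : ℝ) < 2 ^ m := by positivity
  obtain ⟨k, hk, hle⟩ : ∃ k ∈ Finset.range (2 ^ m), ((2 : ℝ) ^ m)⁻¹ ≤ ν.real (idx m ⁻¹' {k}) := by
    refine Finset.exists_le_of_sum_le ⟨0, Finset.mem_range.2 (by positivity)⟩ ?_
    rw [sum_idx, Finset.sum_const, Finset.card_range, nsmul_eq_mul]
    push_cast
    rw [mul_inv_cancel₀ hX.ne']
  rw [lqSum_eq]
  refine le_trans ?_ (Finset.single_le_sum
    (fun k _ => Real.rpow_nonneg measureReal_nonneg _) hk)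
  have e : (2 : ℝ) ^ (-(m * q)) = (((2 : ℝ) ^ m)⁻¹) ^ q := by
    rw [← neg_mul, Real.rpow_mul (by norm_num), Real.rpow_neg (by norm_num), Real.rpow_natCast]
  rw [e]
  exact Real.rpow_le_rpow (by positivity) hle (by linarith)

lemma lqSum_pos {ν : Measure RP1} [IsProbabilityMeasure ν] {q : ℝ} (hq : 1 < q) (m : ℕ) :
    0 < lqSum ν q m :=
  (Real.rpow_pos_of_pos (by norm_num) _).trans_le (le_lqSum hq m)

/-- An atom bounds the `L^q` sums from below, so their exponential rate is zero. -/
lemma tendsto_of_atom {ν : Measure RP1} [IsProbabilityMeasure ν] {q : ℝ} (hq : 1 < q) {x : RP1}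
    (hx : ν {x} ≠ 0) :
    Tendsto (fun m : ℕ => -(1 / (m : ℝ)) * Real.logb 2 (lqSum ν q m)) atTop (𝓝 0) := by
  have hx' : 0 < ν.real {x} := ENNReal.toReal_pos hx (measure_ne_top _ _)
  have hlow : ∀ m, ν.real {x} ^ q ≤ lqSum ν q m := fun m => by
    rw [lqSum_eq]
    refine le_trans ?_ (Finset.single_le_sum (f := fun k => ν.real (idx m ⁻¹' {k}) ^ q)
      (fun k _ => Real.rpow_nonneg measureReal_nonneg _) (Finset.mem_range.2 (idx_lt m x)))
    refine Real.rpow_le_rpow hx'.le (measureReal_mono ?_) (by linarith)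
    rintro y rfl
    rfl
  have hb : ∀ m, |Real.logb 2 (lqSum ν q m)| ≤ |Real.logb 2 (ν.real {x} ^ q)| := fun m => by
    have h1 := Real.logb_le_logb_of_le (b := 2) (by norm_num) (Real.rpow_pos_of_pos hx' q) (hlow m)
    have h2 := Real.logb_nonpos (b := 2) (by norm_num) (lqSum_nonneg ν q m) (lqSum_le_one hq m)
    rw [abs_of_nonpos h2, abs_of_nonpos (h1.trans h2)]
    linarith
  have hlim : Tendsto (fun m : ℕ => -(1 / (m : ℝ))) atTop (𝓝 0) := by
    simpa using tendsto_one_div_atTop_nhds_zero_nat (𝕜 := ℝ).neg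
  refine hlim.zero_mul_isBoundedUnder_le ?_
  exact isBoundedUnder_of ⟨_, fun m => hb m⟩

/-- Fekete's lemma for the logarithms of the `L^q` sums, shifted by the logarithm of the
submultiplicativity constant. -/
lemma exists_tendsto_of_submul {ν : Measure RP1} [IsProbabilityMeasure ν] {q : ℝ} (hq : 1 < q)
    {C : ℝ} (hC : 1 ≤ C) (hsub : ∀ n m, lqSum ν q (n + m) ≤ C * (lqSum ν q n * lqSum ν q m)) :
    ∃ L : ℝ, Tendsto (fun m : ℕ => -(1 / (m : ℝ)) * Real.logb 2 (lqSum ν q m)) atTop (𝓝 L) := by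
  have hC0 : 0 < C := by linarith
  have hlogC : 0 ≤ Real.logb 2 C := Real.logb_nonneg (by norm_num) hC
  set v : ℕ → ℝ := fun m => Real.logb 2 (lqSum ν q m) + Real.logb 2 C with hv
  have hS : Subadditive v := by
    intro n m
    have hn := lqSum_pos (ν := ν) hq n
    have hm := lqSum_pos (ν := ν) hq m
    have h1 := Real.logb_le_logb_of_le (b := 2) (by norm_num) (lqSum_pos hq (n + m)) (hsub n m)
    rw [Real.logb_mul hC0.ne' (mul_pos hn hm).ne', Real.logb_mul hn.ne' hm.ne'] at h1
    simp only [hv]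
    linarith
  have hbdd : BddBelow (range fun n => v n / n) := by
    refine ⟨-q, ?_⟩
    rintro _ ⟨n, rfl⟩
    have h1 := Real.logb_le_logb_of_le (b := 2) (by norm_num)
      (Real.rpow_pos_of_pos (by norm_num) _) (le_lqSum (ν := ν) hq n)
    rw [Real.logb_rpow (by norm_num) (by norm_num)] at h1
    rcases Nat.eq_zero_or_pos n with rfl | hn
    · simp only [Nat.cast_zero, div_zero]
      linarith
    · have hn' : (0 : ℝ) < n := by exact_mod_cast hn
      simp only
      rw [le_div_iff₀ hn']
      simp only [hv]
      nlinarith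
  have hlim := hS.tendsto_lim hbdd
  have hCn : Tendsto (fun n : ℕ => Real.logb 2 C / (n : ℝ)) atTop (𝓝 0) :=
    tendsto_const_div_atTop_nhds_zero_nat _
  refine ⟨-(hS.lim - 0), (hlim.sub hCn).neg.congr fun n => ?_⟩
  simp only [hv]
  ring

/-- the limit defining the L^q spectrum of the stationary measure exists. -/
theorem statement8 {ι : Type} [Fintype ι] [Nonempty ι]
    (A : ι → SL2) (hUH : UniformlyHyperbolic A)
    (K : Set RP1) (hK : IsAttractor A K)
    (p : ι → ℝ) (hp : ∀ i, 0 < p i) (hp1 : ∑ i : ι, p i = 1)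
    (ν : Measure RP1) [IsProbabilityMeasure ν] (hν : IsStationary A p ν) (hνK : ν K = 1) :
    ∀ q : ℝ, 1 < q → ∃ L : ℝ,
      Filter.Tendsto (fun m : ℕ => -(1 / (m : ℝ)) * Real.logb 2 (lqSum ν q m))
        Filter.atTop (nhds L) := by
  intro q hq
  by_cases hna : ∀ x, ν {x} = 0
  · obtain ⟨C, hC, hsub⟩ := exists_lqSum_add_le hUH hp hν hna hq
    exact exists_tendsto_of_submul hq hC hsub
  · push Not at hna
    obtain ⟨x, hx⟩ := hna
    exact ⟨0, tendsto_of_atom hq hx⟩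

end

end Paper
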